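/- arXiv:1504.06105 — 3 statements merged into one kernel-verified Lean document; each statement's English description precedes it below -/
import Mathlib

section
/- Let w̄, w̄' be tuples of words of equal length with w̄ ≼* w̄'. Then the induced isomorphism h : MCAT_C(w̄) → MCAT_C(w̄') extends to an injective map f : List ℚ → List ℚ such that for all words x, y: x ≼ y ↔ f(x) ≼ f(y), x ⊑ y ↔ f(x) ⊑ f(y), and f(x ⊓ y) = f(x) ⊓ f(y). -/
/-!
The tree `T = MCAT_C(w)` is finite, contains `ε` and is closed under `⊓`; since `⊓` is the meet of
the prefix order, the induced isomorphism `h` preserves it (`stretchData_MCAT`).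

A map `f` with all required properties is obtained as soon as, for every word `x`, the successors
`x ++ [q]` are sent into the cones above `f x ++ [φ q]` for some strictly increasing `φ : ℚ → ℚ`
(`LocallyMonotone`): any two words are comparable or branch at a unique point, and both
situations are carried over by `f`.

To build such an `f` extending `h`, first treat a word `x` in the prefix closure of `T`. Let `d` be
the longest prefix of `x` in `T` and `e ∈ T` an extension of `x`; the image of `x` is the prefix of
`h e` of length `|h d| + (|x| - |d|)` (`Img`). The stretching condition ensures that this prefix
exists, does not depend on `e`, and grows properly from `x` to `x ++ [q]` (`img_step`). If several
successors of `x` are in the prefix closure, then `x` is a branching point, so `x ∈ T`, and the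
lexicographic order shows that the letters chosen above `h x` increase (`img_mono`). As only
finitely many letters are concerned, they extend to a strictly increasing map of `ℚ`
(`exists_strictMono_extension`), which is used to send the remaining successors one letter up.
-/


namespace CLTL

/-- A word is a finite sequence of rationals. -/
abbrev Word := List ℚ

/-- Lexicographic order on lists over a linear order: `w ⊑ v` iff `w` is a prefix of `v`,
or they branch at some position with the letter of `w` smaller. -/
def lexLe {α : Type*} [LinearOrder α] (w v : List α) : Prop :=
  w <+: v ∨ ∃ (p : List α) (a b : α), a < b ∧ (p ++ [a]) <+: w ∧ (p ++ [b]) <+: v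

/-- Longest common prefix of two lists. -/
def lcp {α : Type*} [DecidableEq α] : List α → List α → List α
  | a :: w, b :: v => if a = b then a :: lcp w v else []
  | _, _ => []

/-- Iterated longest common prefix of a nonempty list of words. -/
def listLCP : List Word → Word
  | [] => []
  | [x] => x
  | x :: xs => lcp x (listLCP xs)

/-- Insertion of an `m`-gap at `u`. -/
def iota (u : Word) (m : ℕ) (w : Word) : Word :=
  if u <+: w then u ++ List.replicate m 0 ++ w.drop u.length else w

/-- The maximal common ancestor tree of a tuple `w` together with constants `C`:
`{ε}` together with all iterated longest common prefixes of nonempty subsets of entries. -/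
def MCAT (C : List Word) {k : ℕ} (w : Fin k → Word) : Set Word :=
  insert [] { x | ∃ I : Finset (Fin (k + C.length)),
    I.Nonempty ∧ x = listLCP (I.toList.map (Fin.append w C.get)) }

/-- `h` is the induced isomorphism witnessing `typ_C(w) = typ_C(v)`. -/
def IsInducedIso (C : List Word) {k : ℕ} (w v : Fin k → Word) (h : Word → Word) : Prop :=
  Set.BijOn h (MCAT C w) (MCAT C v) ∧
  (∀ x ∈ MCAT C w, ∀ y ∈ MCAT C w,
    (x <+: y ↔ h x <+: h y) ∧ (lexLe x y ↔ lexLe (h x) (h y))) ∧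
  (∀ c ∈ C, h c = c) ∧
  (∀ i : Fin k, h (w i) = v i)

/-- `typ_C(w) = typ_C(v)`. -/
def SameTyp (C : List Word) {k : ℕ} (w v : Fin k → Word) : Prop :=
  ∃ h : Word → Word, IsInducedIso C w v h

/-- The stretching condition on an isomorphism `h` of `MCAT_C(w)`:
`|h e| - |h d| ≥ |e| - |d|` whenever `d` is a proper prefix of `e`. -/
def StretchCond (C : List Word) {k : ℕ} (w : Fin k → Word) (h : Word → Word) : Prop :=
  ∀ d ∈ MCAT C w, ∀ e ∈ MCAT C w, d <+: e → d ≠ e →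
    e.length + (h d).length ≤ (h e).length + d.length

/-- `w ≼* v` for tuples of words. -/
def Stretch (C : List Word) {k : ℕ} (w v : Fin k → Word) : Prop :=
  ∃ h : Word → Word, IsInducedIso C w v h ∧ StretchCond C w h

/-- `≼*` on configurations. -/
def ConfigLe (C : List Word) {Q : Type*} {n : ℕ}
    (c d : Q × (Fin n → Word)) : Prop :=
  c.1 = d.1 ∧ Stretch C c.2 d.2

/-- A transition relation is type-invariant. -/
def TypeInvariant (C : List Word) {Q : Type*} {n : ℕ}
    (step : (Q × (Fin n → Word)) → (Q × (Fin n → Word)) → Prop) : Prop :=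
  ∀ (q p : Q) (w v w' v' : Fin n → Word),
    step (q, w) (p, v) → SameTyp C (Fin.append w v) (Fin.append w' v') →
      step (q, w') (p, v')

/-- Finite runs, indexed by `Fin (N+1)`. -/
def IsFinRun {Q : Type*} {n : ℕ}
    (step : (Q × (Fin n → Word)) → (Q × (Fin n → Word)) → Prop)
    {N : ℕ} (r : Fin (N + 1) → Q × (Fin n → Word)) : Prop :=
  ∀ i : Fin N, step (r i.castSucc) (r i.succ)

/-- Infinite runs. -/
def IsInfRun {Q : Type*} {n : ℕ}
    (step : (Q × (Fin n → Word)) → (Q × (Fin n → Word)) → Prop)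
    (r : ℕ → Q × (Fin n → Word)) : Prop :=
  ∀ i : ℕ, step (r i) (r (i + 1))

/-- The pair `(w, v)` (of tuples of equal type) is contracting. -/
def ContractingPair (C : List Word) {k : ℕ} (w v : Fin k → Word) : Prop :=
  ∃ h : Word → Word, IsInducedIso C w v h ∧
    ((∃ d ∈ MCAT C w, h d <+: d ∧ h d ≠ d) ∨
     (∃ d ∈ MCAT C w, ∃ e ∈ MCAT C w,
        d <+: e ∧ d ≠ e ∧ h e = e ∧ d <+: h d ∧ d ≠ h d))

/-- A set of words `T` has `n`-gaps above `B`. -/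
def HasGaps (n : ℕ) (T B : Set Word) : Prop :=
  ∀ d ∈ T, ∀ e ∈ T, d <+: e → d ≠ e → (∀ b ∈ B, ¬ e <+: b) → n + d.length < e.length

/-! ### Longest common prefixes and branching -/

theorem prefix_lcp_iff {α : Type*} [DecidableEq α] (z x y : List α) :
    z <+: lcp x y ↔ z <+: x ∧ z <+: y := by
  induction x generalizing y z with
  | nil => cases y <;> simp +contextual [lcp]
  | cons a x ih =>
    cases y with
    | nil => simp +contextual [lcp]
    | cons b y =>
      cases z with
      | nil => simp
      | cons c z =>
        by_cases hab : a = b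
        · subst hab
          simp only [lcp, if_true, List.cons_prefix_cons, ih]
          tauto
        · simp only [lcp, if_neg hab, List.cons_prefix_cons]
          constructor
          · intro h
            simp at h
          · rintro ⟨⟨rfl, _⟩, ⟨rfl, _⟩⟩
            exact absurd rfl hab

theorem prefix_antisymm {α : Type*} {x y : List α} (h₁ : x <+: y) (h₂ : y <+: x) : x = y :=
  h₁.eq_of_length (le_antisymm h₁.length_le h₂.length_le)

theorem lcp_eq_left {α : Type*} [DecidableEq α] {x y : List α} (h : x <+: y) : lcp x y = x :=
  prefix_antisymm ((prefix_lcp_iff _ _ _).1 List.prefix_rfl).1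
    ((prefix_lcp_iff _ _ _).2 ⟨List.prefix_rfl, h⟩)

theorem lcp_comm' {α : Type*} [DecidableEq α] (x y : List α) : lcp x y = lcp y x :=
  prefix_antisymm
    ((prefix_lcp_iff _ _ _).2 ((prefix_lcp_iff _ _ _).1 List.prefix_rfl).symm)
    ((prefix_lcp_iff _ _ _).2 ((prefix_lcp_iff _ _ _).1 List.prefix_rfl).symm)

theorem letter_unique {α : Type*} {p x : List α} {a b : α}
    (ha : p ++ [a] <+: x) (hb : p ++ [b] <+: x) : a = b := by
  have h := List.prefix_of_prefix_length_le ha hb (by simp)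
  simpa using h.eq_of_length (by simp)

theorem prefix_snoc {α : Type*} (p : List α) (a : α) : p <+: p ++ [a] := ⟨[a], rfl⟩

theorem exists_snoc_pre {α : Type*} {x y : List α} (h : x <+: y) (hne : x ≠ y) :
    ∃ q, x ++ [q] <+: y := by
  obtain ⟨t, rfl⟩ := h
  cases t with
  | nil => simp at hne
  | cons q t => exact ⟨q, t, by simp⟩

theorem lcp_eq_of_branch {α : Type*} [DecidableEq α] {p x y : List α} {a b : α}
    (ha : p ++ [a] <+: x) (hb : p ++ [b] <+: y) (hab : a ≠ b) : lcp x y = p := by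
  have hp : p <+: lcp x y :=
    (prefix_lcp_iff _ _ _).2 ⟨(prefix_snoc p a).trans ha, (prefix_snoc p b).trans hb⟩
  by_contra hne
  obtain ⟨q, hq⟩ := exists_snoc_pre hp (Ne.symm hne)
  obtain ⟨h₁, h₂⟩ := (prefix_lcp_iff _ _ _).1 hq
  exact hab ((letter_unique ha h₁).trans (letter_unique h₂ hb))

/-- `x` and `y` are prefix-incomparable, and the letter of `x` at the branching point `p` is the
smaller one. -/
def Branch (p x y : Word) : Prop :=
  ∃ a b : ℚ, a < b ∧ p ++ [a] <+: x ∧ p ++ [b] <+: y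

theorem Branch.lcp_eq {p x y : Word} (h : Branch p x y) : lcp x y = p := by
  obtain ⟨a, b, hab, ha, hb⟩ := h
  exact lcp_eq_of_branch ha hb hab.ne

theorem Branch.not_pre {p x y : Word} (h : Branch p x y) : ¬ x <+: y := by
  obtain ⟨a, b, hab, ha, hb⟩ := h
  exact fun hxy => hab.ne (letter_unique (ha.trans hxy) hb)

theorem Branch.not_pre' {p x y : Word} (h : Branch p x y) : ¬ y <+: x := by
  obtain ⟨a, b, hab, ha, hb⟩ := h
  exact fun hxy => hab.ne (letter_unique ha (hb.trans hxy))

theorem Branch.asymm {p p' x y : Word} (h : Branch p x y) (h' : Branch p' y x) : False := by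
  have hp : p = p' := by rw [← h.lcp_eq, ← h'.lcp_eq, lcp_comm']
  subst hp
  obtain ⟨a, b, hab, ha, hb⟩ := h
  obtain ⟨c, d, hcd, hc, hd⟩ := h'
  have h₁ := letter_unique ha hd
  have h₂ := letter_unique hb hc
  subst h₁ h₂
  exact lt_asymm hab hcd

theorem Branch.not_lexLe {p x y : Word} (h : Branch p x y) : ¬ lexLe y x := by
  rintro (hle | ⟨p', hbr⟩)
  · exact h.not_pre' hle
  · exact h.asymm hbr

/-- Any two words are prefix-comparable or branch, in one direction or the other. -/
theorem compare_words (x y : Word) :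
    x <+: y ∨ y <+: x ∨ (∃ p, Branch p x y) ∨ ∃ p, Branch p y x := by
  obtain ⟨hx, hy⟩ := (prefix_lcp_iff _ x y).1 List.prefix_rfl
  by_cases h₁ : lcp x y = x
  · exact Or.inl (h₁ ▸ hy)
  by_cases h₂ : lcp x y = y
  · exact Or.inr (Or.inl (h₂ ▸ hx))
  obtain ⟨a, ha⟩ := exists_snoc_pre hx h₁
  obtain ⟨b, hb⟩ := exists_snoc_pre hy h₂
  rcases lt_trichotomy a b with hab | hab | hab
  · exact Or.inr (Or.inr (Or.inl ⟨_, a, b, hab, ha, hb⟩))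
  · subst hab
    have := ((prefix_lcp_iff _ _ _).2 ⟨ha, hb⟩).length_le
    simp at this
  · exact Or.inr (Or.inr (Or.inr ⟨_, b, a, hab, hb, ha⟩))

/-! ### Tree embeddings determined by their behaviour on successors -/

/-- `f` sends the successors of each word `x` into the cones above successors of `f x`, in a
strictly increasing way. -/
def LocallyMonotone (f : Word → Word) : Prop :=
  ∀ x, ∃ φ : ℚ → ℚ, StrictMono φ ∧ ∀ q, f x ++ [φ q] <+: f (x ++ [q])

theorem LocallyMonotone.map_pre {f : Word → Word} (hf : LocallyMonotone f) {x y : Word}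
    (hxy : x <+: y) : f x <+: f y := by
  obtain ⟨t, rfl⟩ := hxy
  induction t using List.reverseRecOn with
  | nil => simp
  | append_singleton t q ih =>
    obtain ⟨φ, -, hφ⟩ := hf (x ++ t)
    rw [← List.append_assoc]
    exact (ih.trans (prefix_snoc _ _)).trans (hφ q)

theorem LocallyMonotone.branch {f : Word → Word} (hf : LocallyMonotone f) {p x y : Word}
    (h : Branch p x y) : Branch (f p) (f x) (f y) := by
  obtain ⟨a, b, hab, ha, hb⟩ := h
  obtain ⟨φ, hm, hφ⟩ := hf p
  exact ⟨φ a, φ b, hm hab, (hφ a).trans (hf.map_pre ha), (hφ b).trans (hf.map_pre hb)⟩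

theorem LocallyMonotone.prefix_iff {f : Word → Word} (hf : LocallyMonotone f) (x y : Word) :
    x <+: y ↔ f x <+: f y := by
  refine ⟨hf.map_pre, fun h => ?_⟩
  rcases compare_words x y with h' | h' | ⟨p, h'⟩ | ⟨p, h'⟩
  · exact h'
  · by_contra hne
    obtain ⟨q, hq⟩ := exists_snoc_pre h' (by rintro rfl; exact hne List.prefix_rfl)
    obtain ⟨φ, -, hφ⟩ := hf y
    have := (((hφ q).trans (hf.map_pre hq)).trans h).length_le
    simp at this
  · exact absurd h (hf.branch h').not_pre
  · exact absurd h (hf.branch h').not_pre'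

theorem LocallyMonotone.injective {f : Word → Word} (hf : LocallyMonotone f) :
    Function.Injective f := fun x y h =>
  prefix_antisymm ((hf.prefix_iff x y).2 (by rw [h])) ((hf.prefix_iff y x).2 (by rw [h]))

theorem LocallyMonotone.lexLe_iff {f : Word → Word} (hf : LocallyMonotone f) (x y : Word) :
    lexLe x y ↔ lexLe (f x) (f y) := by
  constructor
  · rintro (h | ⟨p, h⟩)
    · exact Or.inl (hf.map_pre h)
    · exact Or.inr ⟨_, hf.branch h⟩
  · intro h
    rcases compare_words x y with h' | h' | ⟨p, h'⟩ | ⟨p, h'⟩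
    · exact Or.inl h'
    · rcases h with h | ⟨p, h⟩
      · exact Or.inl ((hf.prefix_iff _ _).2 h)
      · exact absurd (hf.map_pre h') (Branch.not_pre' h)
    · exact Or.inr ⟨p, h'⟩
    · exact absurd h (hf.branch h').not_lexLe

theorem LocallyMonotone.map_lcp {f : Word → Word} (hf : LocallyMonotone f) (x y : Word) :
    f (lcp x y) = lcp (f x) (f y) := by
  rcases compare_words x y with h | h | ⟨p, h⟩ | ⟨p, h⟩
  · rw [lcp_eq_left h, lcp_eq_left (hf.map_pre h)]
  · rw [lcp_comm' x, lcp_comm' (f x), lcp_eq_left h, lcp_eq_left (hf.map_pre h)]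
  · rw [h.lcp_eq, (hf.branch h).lcp_eq]
  · rw [lcp_comm' x, lcp_comm' (f x), h.lcp_eq, (hf.branch h).lcp_eq]

/-! ### Extending finite increasing maps of the rationals -/

theorem exists_strictMono_extension (s : Finset ℚ) (g : ℚ → ℚ) (hg : StrictMonoOn g s) :
    ∃ φ : ℚ → ℚ, StrictMono φ ∧ ∀ q ∈ s, φ q = g q := by
  induction s using Finset.induction_on_max with
  | empty => exact ⟨id, strictMono_id, by simp⟩
  | insert a s ha ih =>
    obtain ⟨φ, hφ, hs⟩ := ih (hg.mono (by simp))
    rcases s.eq_empty_or_nonempty with rfl | hne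
    · exact ⟨fun q => q + (g a - a), fun x y hxy => by simpa using hxy, by simp⟩
    · set m := s.max' hne
      have hm : m ∈ s := s.max'_mem hne
      have hma : m < a := ha m hm
      have hv : g m < g a := hg (by simp [hm]) (by simp) hma
      have hc : 0 < (g a - g m) / (a - m) := div_pos (by linarith) (by linarith)
      -- beyond the largest old point `m`, follow the line through `(m, g m)` and `(a, g a)`
      refine ⟨fun q => if q ≤ m then φ q else g m + (q - m) * ((g a - g m) / (a - m)), ?_, ?_⟩
      · intro x y hxy
        by_cases hy : y ≤ m
        · simp only [if_pos hy, if_pos (hxy.le.trans hy)]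
          exact hφ hxy
        · push Not at hy
          by_cases hx : x ≤ m
          · simp only [if_pos hx, if_neg hy.not_ge]
            have h₁ : φ x ≤ g m := hs m hm ▸ hφ.monotone hx
            have h₂ := mul_pos (sub_pos.2 hy) hc
            linarith
          · simp only [if_neg hx, if_neg hy.not_ge]
            have h₂ := mul_lt_mul_of_pos_right (sub_lt_sub_right hxy m) hc
            linarith
      · intro q hq
        rcases Finset.mem_insert.1 hq with rfl | hq
        · have : q - m ≠ 0 := by linarith
          simp only [if_neg hma.not_ge]
          field_simp
          ring
        · have hqm : q ≤ m := s.le_max' q hq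
          simp only [if_pos hqm, hs q hq]

/-! ### Extending a stretching isomorphism of a finite meet-closed set of words -/

/-- A finite `⊓`-closed set `T` of words containing `ε`, and a map `h` that on `T` preserves
`ε`, prefixes, `⊓` and the lexicographic order and does not shorten distances along branches. -/
structure StretchData (T : Set Word) (h : Word → Word) : Prop where
  finite : T.Finite
  nil_mem : [] ∈ T
  lcp_mem : ∀ x ∈ T, ∀ y ∈ T, lcp x y ∈ T
  map_nil : h [] = []
  pre : ∀ x ∈ T, ∀ y ∈ T, (x <+: y ↔ h x <+: h y)
  lex : ∀ x ∈ T, ∀ y ∈ T, (lexLe x y ↔ lexLe (h x) (h y))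
  map_lcp : ∀ x ∈ T, ∀ y ∈ T, h (lcp x y) = lcp (h x) (h y)
  stretch : ∀ d ∈ T, ∀ e ∈ T, d <+: e → d ≠ e →
    e.length + (h d).length ≤ (h e).length + d.length

/-- `d` is the longest prefix of `x` lying in `T`. -/
def IsBase (T : Set Word) (x d : Word) : Prop :=
  d ∈ T ∧ d <+: x ∧ ∀ u ∈ T, u <+: x → u <+: d

/-- `z` is the image assigned to the word `x` of the prefix closure of `T`: with `d` the longest
prefix of `x` in `T` and `e ∈ T` extending `x`, it is the prefix of `h e` at the same distance
from `h d` as `x` is from `d`. -/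
def Img (T : Set Word) (h : Word → Word) (x z : Word) : Prop :=
  ∃ d e, IsBase T x d ∧ e ∈ T ∧ x <+: e ∧
    z = (h e).take ((h d).length + (x.length - d.length))

theorem take_eq_of_pre {α : Type*} {a b : List α} (hab : a <+: b) {n : ℕ}
    (hn : n ≤ a.length) : b.take n = a.take n := by
  obtain ⟨t, rfl⟩ := hab
  rw [List.take_append_of_le_length hn]

namespace StretchData

variable {T : Set Word} {h : Word → Word}

theorem exists_base (H : StretchData T h) (x : Word) : ∃ d, IsBase T x d := by
  have hfin : {d ∈ T | d <+: x}.Finite := H.finite.subset (Set.sep_subset _ _)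
  obtain ⟨d, ⟨hdT, hdx⟩, hmax⟩ :=
    Set.exists_max_image _ List.length hfin ⟨[], H.nil_mem, List.nil_prefix⟩
  exact ⟨d, hdT, hdx, fun d' h' hx' =>
    List.prefix_of_prefix_length_le hx' hdx (hmax d' ⟨h', hx'⟩)⟩

theorem base_unique {x d d' : Word} (hd : IsBase T x d) (hd' : IsBase T x d') : d = d' :=
  prefix_antisymm (hd'.2.2 d hd.1 hd.2.1) (hd.2.2 d' hd'.1 hd'.2.1)

theorem bound (H : StretchData T h) {x d e : Word} (hd : IsBase T x d) (he : e ∈ T)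
    (hxe : x <+: e) : (h d).length + (x.length - d.length) ≤ (h e).length := by
  have h₁ := hd.2.1.length_le
  have h₂ := hxe.length_le
  by_cases hde : d = e
  · subst hde
    omega
  · have := H.stretch d hd.1 e he (hd.2.1.trans hxe) hde
    omega

theorem take_eq (H : StretchData T h) {x d e e' : Word} (hd : IsBase T x d) (he : e ∈ T)
    (hxe : x <+: e) (he' : e' ∈ T) (hxe' : x <+: e') :
    (h e).take ((h d).length + (x.length - d.length)) =
      (h e').take ((h d).length + (x.length - d.length)) := by
  have hu := H.lcp_mem e he e' he'
  have hb := H.bound hd hu ((prefix_lcp_iff _ _ _).2 ⟨hxe, hxe'⟩)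
  obtain ⟨h₁, h₂⟩ := (prefix_lcp_iff _ e e').1 List.prefix_rfl
  rw [take_eq_of_pre ((H.pre _ hu _ he).1 h₁) hb,
    take_eq_of_pre ((H.pre _ hu _ he').1 h₂) hb]

theorem img_unique (H : StretchData T h) {x z z' : Word} (hz : Img T h x z)
    (hz' : Img T h x z') : z = z' := by
  obtain ⟨d, e, hd, he, hxe, rfl⟩ := hz
  obtain ⟨d', e', hd', he', hxe', rfl⟩ := hz'
  obtain rfl := base_unique hd hd'
  exact H.take_eq hd he hxe he' hxe'

theorem exists_img (H : StretchData T h) {x e : Word} (he : e ∈ T) (hxe : x <+: e) :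
    ∃ z, Img T h x z := by
  obtain ⟨d, hd⟩ := H.exists_base x
  exact ⟨_, d, e, hd, he, hxe, rfl⟩

theorem img_self {x : Word} (hx : x ∈ T) : Img T h x (h x) :=
  ⟨x, x, ⟨hx, List.prefix_rfl, fun _ _ h' => h'⟩, hx, List.prefix_rfl, by simp⟩

theorem img_pre (H : StretchData T h) {x z e : Word} (hz : Img T h x z) (he : e ∈ T)
    (hxe : x <+: e) : z <+: h e := by
  obtain ⟨d, e', hd, he', hxe', rfl⟩ := hz
  rw [H.take_eq hd he' hxe' he hxe]
  exact List.take_prefix _ _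

/-- The image of a successor properly extends the image; this is where stretching is needed when
`x ++ [q]` is itself in `T`. -/
theorem img_step (H : StretchData T h) {x z z' : Word} {q : ℚ} (hz : Img T h x z)
    (hz' : Img T h (x ++ [q]) z') : ∃ c, z ++ [c] <+: z' := by
  obtain ⟨d', e, hd', he, hxe, rfl⟩ := hz'
  obtain ⟨d, e₀, hd, he₀, hxe₀, rfl⟩ := hz
  have hxe' : x <+: e := (prefix_snoc x q).trans hxe
  rw [H.take_eq hd he₀ hxe₀ he hxe']
  have hb := H.bound hd' he hxe
  have hlt : (h d).length + (x.length - d.length) <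
      (h d').length + ((x ++ [q]).length - d'.length) := by
    have hdx := hd.2.1.length_le
    by_cases hdd : d = d'
    · subst hdd
      simp only [List.length_append, List.length_singleton]
      omega
    · have hdd' : d <+: d' := hd'.2.2 d hd.1 (hd.2.1.trans (prefix_snoc x q))
      rcases List.prefix_concat_iff.1 hd'.2.1 with h₁ | h₁
      · have := H.stretch d hd.1 d' hd'.1 hdd' hdd
        rw [h₁] at this ⊢
        simp only [List.length_append, List.length_singleton] at this ⊢
        omega
      · exact absurd (prefix_antisymm hdd' (hd.2.2 d' hd'.1 h₁)) hdd
  refine ⟨(h e)[(h d).length + (x.length - d.length)]'(by omega), ?_⟩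
  rw [List.take_concat_get']
  exact List.take_prefix_take_left (by omega)

theorem img_mono (H : StretchData T h) {x z z₁ z₂ : Word} {q₁ q₂ c₁ c₂ : ℚ} (hq : q₁ < q₂)
    (hz : Img T h x z) (hz₁ : Img T h (x ++ [q₁]) z₁) (hz₂ : Img T h (x ++ [q₂]) z₂)
    (hc₁ : z ++ [c₁] <+: z₁) (hc₂ : z ++ [c₂] <+: z₂) : c₁ < c₂ := by
  obtain ⟨-, e₁, -, he₁, hx₁, -⟩ := id hz₁
  obtain ⟨-, e₂, -, he₂, hx₂, -⟩ := id hz₂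
  have hB : Branch x e₁ e₂ := ⟨q₁, q₂, hq, hx₁, hx₂⟩
  -- a branching point of two elements of `T` lies in `T`
  have hxT : x ∈ T := hB.lcp_eq ▸ H.lcp_mem e₁ he₁ e₂ he₂
  obtain rfl := H.img_unique hz (img_self hxT)
  have hL : lexLe (h e₁) (h e₂) := (H.lex _ he₁ _ he₂).1 (Or.inr ⟨x, hB⟩)
  rcases hL with hL | ⟨p, hL⟩
  · exact absurd ((H.pre _ he₁ _ he₂).2 hL) hB.not_pre
  · have hp : h x = p := by
      rw [← Branch.lcp_eq hL, ← H.map_lcp _ he₁ _ he₂, hB.lcp_eq]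
    subst hp
    obtain ⟨a, b, hab, ha, hb⟩ := hL
    rw [letter_unique (hc₁.trans (H.img_pre hz₁ he₁ hx₁)) ha,
      letter_unique (hc₂.trans (H.img_pre hz₂ he₂ hx₂)) hb]
    exact hab

/-- At every word, the letters dictated by `Img` extend to a strictly increasing map of `ℚ`. -/
theorem exists_letterMap (H : StretchData T h) (x : Word) :
    ∃ φ : ℚ → ℚ, StrictMono φ ∧
      ∀ q z z', Img T h x z → Img T h (x ++ [q]) z' → z ++ [φ q] <+: z' := by
  classical
  by_cases hx : ∃ z, Img T h x z
  swap
  · exact ⟨id, strictMono_id, fun q z _ hz => absurd ⟨z, hz⟩ hx⟩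
  obtain ⟨z, hz⟩ := hx
  have hstep : ∀ q, ∃ c, ∀ z', Img T h (x ++ [q]) z' → z ++ [c] <+: z' := by
    intro q
    by_cases hq : ∃ z', Img T h (x ++ [q]) z'
    · obtain ⟨z', hz'⟩ := hq
      obtain ⟨c, hc⟩ := H.img_step hz hz'
      exact ⟨c, fun z'' hz'' => H.img_unique hz' hz'' ▸ hc⟩
    · exact ⟨0, fun z' hz' => absurd ⟨z', hz'⟩ hq⟩
  choose g hg using hstep
  have hfin : {q | ∃ z', Img T h (x ++ [q]) z'}.Finite := by
    refine (H.finite.image fun e => e.getD x.length 0).subset ?_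
    rintro q ⟨z', d, e, -, he, ⟨t, rfl⟩, -⟩
    exact ⟨_, he, by simp⟩
  obtain ⟨φ, hφ, hs⟩ := exists_strictMono_extension hfin.toFinset g (by
    intro q₁ h₁ q₂ h₂ hq
    simp only [Set.Finite.coe_toFinset, Set.mem_ofPred_eq] at h₁ h₂
    obtain ⟨z₁, hz₁⟩ := h₁
    obtain ⟨z₂, hz₂⟩ := h₂
    exact H.img_mono hq hz hz₁ hz₂ (hg _ _ hz₁) (hg _ _ hz₂))
  refine ⟨φ, hφ, fun q z₀ z' hz₀ hz' => ?_⟩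
  rw [H.img_unique hz₀ hz, hs q (by simpa using ⟨z', hz'⟩)]
  exact hg q z' hz'

theorem exists_extension (H : StretchData T h) :
    ∃ f : Word → Word, (∀ x ∈ T, f x = h x) ∧ LocallyMonotone f := by
  classical
  choose φ hφ hφimg using H.exists_letterMap
  -- recursion along the word: use `Img` while inside the prefix closure of `T`, and afterwards
  -- append single letters given by `φ`; the state is (letters read, output)
  let step : Word × Word → ℚ → Word × Word := fun s q =>
    (s.1 ++ [q], if hq : ∃ z, Img T h (s.1 ++ [q]) z then hq.choose else s.2 ++ [φ s.1 q])
  let f : Word → Word := fun x => (x.foldl step ([], [])).2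
  have hfst : ∀ x : Word, (x.foldl step ([], [])).1 = x := by
    intro x
    induction x using List.reverseRecOn with
    | nil => rfl
    | append_singleton x q ih => rw [List.foldl_append]; simp [step, ih]
  have hf : ∀ x q, f (x ++ [q]) =
      if hq : ∃ z, Img T h (x ++ [q]) z then hq.choose else f x ++ [φ x q] := by
    intro x q
    simp only [f, List.foldl_append, List.foldl_cons, List.foldl_nil]
    simp only [step, hfst]
  have himg : ∀ x z, Img T h x z → f x = z := by
    intro x z hz
    induction x using List.reverseRecOn with
    | nil => rw [H.img_unique hz (img_self H.nil_mem), H.map_nil]; rfl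
    | append_singleton x q ih =>
      have hq : ∃ z, Img T h (x ++ [q]) z := ⟨z, hz⟩
      rw [hf, dif_pos hq]
      exact H.img_unique hq.choose_spec hz
  refine ⟨f, fun x hx => himg x _ (img_self hx), fun x => ⟨φ x, hφ x, fun q => ?_⟩⟩
  by_cases hq : ∃ z, Img T h (x ++ [q]) z
  · obtain ⟨z', hz'⟩ := hq
    obtain ⟨-, e, -, he, hxe, -⟩ := id hz'
    obtain ⟨z, hz⟩ := H.exists_img he ((prefix_snoc x q).trans hxe)
    rw [himg _ _ hz, himg _ _ hz']
    exact hφimg x q z z' hz hz'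
  · rw [hf, dif_neg hq]

end StretchData

/-! ### Maximal common ancestor trees -/

theorem prefix_listLCP_iff (z : Word) (l : List Word) (hl : l ≠ []) :
    z <+: listLCP l ↔ ∀ x ∈ l, z <+: x := by
  induction l with
  | nil => exact absurd rfl hl
  | cons x l ih =>
    cases l with
    | nil => simp [listLCP]
    | cons y l =>
      rw [listLCP, prefix_lcp_iff, ih (by simp)]
      · simp
      · simp

theorem lcp_mem_MCAT (C : List Word) {k : ℕ} (w : Fin k → Word) {x y : Word}
    (hx : x ∈ MCAT C w) (hy : y ∈ MCAT C w) : lcp x y ∈ MCAT C w := by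
  classical
  rcases hx with rfl | ⟨I, hI, rfl⟩
  · rw [lcp_eq_left List.nil_prefix]
    exact Or.inl rfl
  rcases hy with rfl | ⟨J, hJ, rfl⟩
  · rw [lcp_comm', lcp_eq_left List.nil_prefix]
    exact Or.inl rfl
  refine Or.inr ⟨I ∪ J, hI.mono Finset.subset_union_left, ?_⟩
  have key : ∀ z : Word,
      z <+: lcp (listLCP (I.toList.map (Fin.append w C.get)))
        (listLCP (J.toList.map (Fin.append w C.get))) ↔
      z <+: listLCP ((I ∪ J).toList.map (Fin.append w C.get)) := by
    intro z
    rw [prefix_lcp_iff, prefix_listLCP_iff _ _ (by simpa using hI.ne_empty),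
      prefix_listLCP_iff _ _ (by simpa using hJ.ne_empty),
      prefix_listLCP_iff _ _ (by simp [hI.ne_empty])]
    simp only [List.mem_map, Finset.mem_toList, Finset.mem_union]
    constructor
    · rintro ⟨h₁, h₂⟩ x ⟨i, hi | hi, rfl⟩
      · exact h₁ _ ⟨i, hi, rfl⟩
      · exact h₂ _ ⟨i, hi, rfl⟩
    · intro h'
      constructor
      · rintro x ⟨i, hi, rfl⟩
        exact h' _ ⟨i, Or.inl hi, rfl⟩
      · rintro x ⟨i, hi, rfl⟩
        exact h' _ ⟨i, Or.inr hi, rfl⟩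
  exact prefix_antisymm ((key _).1 List.prefix_rfl) ((key _).2 List.prefix_rfl)

theorem finite_MCAT (C : List Word) {k : ℕ} (w : Fin k → Word) : (MCAT C w).Finite := by
  refine Set.Finite.insert _ ((Set.finite_range
    fun I : Finset (Fin (k + C.length)) => listLCP (I.toList.map (Fin.append w C.get))).subset ?_)
  rintro x ⟨I, -, rfl⟩
  exact ⟨I, rfl⟩

theorem stretchData_MCAT (C : List Word) {k : ℕ} (w w' : Fin k → Word) (h : Word → Word)
    (hiso : IsInducedIso C w w' h) (hstr : StretchCond C w h) : StretchData (MCAT C w) h := by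
  obtain ⟨hbij, hord, -, -⟩ := hiso
  have hnil : ([] : Word) ∈ MCAT C w := Or.inl rfl
  refine ⟨finite_MCAT C w, hnil, fun x hx y hy => lcp_mem_MCAT C w hx hy, ?_,
    fun x hx y hy => (hord x hx y hy).1, fun x hx y hy => (hord x hx y hy).2, ?_, hstr⟩
  · obtain ⟨u, hu, hu'⟩ := hbij.surjOn (Or.inl rfl : ([] : Word) ∈ MCAT C w')
    have := (hord [] hnil u hu).1.1 List.nil_prefix
    rw [hu'] at this
    simpa using this
  · -- `⊓` is the meet of the prefix order within each tree, so an order isomorphism preserves it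
    intro x hx y hy
    have hm := lcp_mem_MCAT C w hx hy
    obtain ⟨u, hu, hu'⟩ :=
      hbij.surjOn (lcp_mem_MCAT C w' (hbij.mapsTo hx) (hbij.mapsTo hy))
    obtain ⟨h₁, h₂⟩ := (prefix_lcp_iff _ x y).1 List.prefix_rfl
    obtain ⟨h₃, h₄⟩ := (prefix_lcp_iff _ (h x) (h y)).1 List.prefix_rfl
    apply prefix_antisymm
    · exact (prefix_lcp_iff _ _ _).2 ⟨(hord _ hm _ hx).1.1 h₁, (hord _ hm _ hy).1.1 h₂⟩
    · rw [← hu'] at h₃ h₄ ⊢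
      exact (hord _ hu _ hm).1.1 ((prefix_lcp_iff _ _ _).2
        ⟨(hord _ hu _ hx).1.2 h₃, (hord _ hu _ hy).1.2 h₄⟩)

/-- If `w ≼* w'`, then the induced isomorphism extends to an injection of all of `List ℚ`
preserving the prefix order, the lexicographic order (in both directions), and longest
common prefixes. -/
theorem stmt12 (C : List Word) (hC : ∀ c ∈ C, ∀ c' : Word, c' <+: c → c' ∈ C)
    {k : ℕ} (w w' : Fin k → Word) (h : Word → Word)
    (hiso : IsInducedIso C w w' h) (hstr : StretchCond C w h) :
    ∃ f : Word → Word,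
      (∀ x ∈ MCAT C w, f x = h x) ∧
      Function.Injective f ∧
      (∀ x y : Word, x <+: y ↔ f x <+: f y) ∧
      (∀ x y : Word, lexLe x y ↔ lexLe (f x) (f y)) ∧
      (∀ x y : Word, f (lcp x y) = lcp (f x) (f y)) := by
  obtain ⟨f, hfh, hf⟩ := (stretchData_MCAT C w w' h hiso hstr).exists_extension
  exact ⟨f, hfh, hf.injective, hf.prefix_iff, hf.lexLe_iff, hf.map_lcp⟩

end CLTL
end

section
/- Let n ∈ ℕ, let A be a finite set of words containing the empty word ε and closed under binary longest common prefixes, let B ⊆ A, and let h : A → List ℚ be an injective map such that for all x, y ∈ A: x ≼ y ↔ h(x) ≼ h(y), x ⊑ y ↔ h(x) ⊑ h(y), and h(x ⊓ y) = h(x) ⊓ h(y), and such that the image h(A) has n-gaps above h(B). Let D be a finite set of words such that |D \ A| ≤ n, A ∪ D is closed under binary longest common prefixes, and no d ∈ D is a prefix of any b ∈ B. Then h extends to an injective map h_D : A ∪ D → List ℚ satisfying, for all x, y ∈ A ∪ D: x ≼ y ↔ h_D(x) ≼ h_D(y), x ⊑ y ↔ h_D(x) ⊑ h_D(y), and h_D(x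 ⊓ y) = h_D(x) ⊓ h_D(y). -/
/-!
The words of `D \ A` are added to the domain one at a time, shortest first. What has to be carried
along is `Roomy`: the current map is an embedding, and whenever `x ≺ y` are already placed, the
length difference of their images exceeds the number of words still to be placed strictly between
them. Initially this follows from the gap hypothesis if `y` is not below `B`, since at most `n`
words are added; and if `y` is below `B`, no word of `D` lies between `x` and `y`.

Let `d` be a shortest word still to be placed and `p` its longest prefix already placed. The image
of `d` is `h p` followed by one letter (`Roomy.place`). If some placed word extends `d`, this
letter is read off from its image, and there is room for it because `d` itself was counted between
`p` and that word. Otherwise the letter is chosen by density of `ℚ` so that it sits correctly among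
the letters following `h p` in the images of the other branches at `p` (`exists_letter`). No
unplaced word is a proper prefix of `d`, so no room is needed below `d`.

An embedding is encoded by preservation of proper prefixes and of branchings with the order of the
branching letters (`KeepsBranch`); as any two words are prefix-comparable or branch, this gives all
the required equivalences (`Roomy.embedding`).
-/

namespace CLTL

/-! ### Words, prefixes and branchings -/

lemma lcp_prefix_left (x y : Word) : lcp x y <+: x := by
  induction x generalizing y with
  | nil => simp [lcp]
  | cons a w ih =>
    cases y with
    | nil => simp [lcp]
    | cons b v =>
      by_cases hab : a = b
      · simpa [lcp, hab, List.cons_prefix_cons] using ih v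
      · simp [lcp, hab]

lemma lcp_prefix_right (x y : Word) : lcp x y <+: y := by
  induction x generalizing y with
  | nil => simp [lcp]
  | cons a w ih =>
    cases y with
    | nil => simp [lcp]
    | cons b v =>
      by_cases hab : a = b
      · simpa [lcp, hab, List.cons_prefix_cons] using ih v
      · simp [lcp, hab]

lemma prefix_lcp {q x y : Word} (hx : q <+: x) (hy : q <+: y) : q <+: lcp x y := by
  induction q generalizing x y with
  | nil => simp
  | cons c q ih =>
    obtain ⟨s, rfl⟩ := hx
    obtain ⟨t, rfl⟩ := hy
    simpa [lcp, List.cons_prefix_cons] using ih (List.prefix_append q s) (List.prefix_append q t)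

lemma prefix_antisymm_s13 {x y : Word} (h1 : x <+: y) (h2 : y <+: x) : x = y :=
  h1.eq_of_length (le_antisymm h1.length_le h2.length_le)

lemma length_lt_of_prefix {x y : Word} (h1 : x <+: y) (hne : x ≠ y) : x.length < y.length :=
  lt_of_le_of_ne h1.length_le fun e => hne (h1.eq_of_length e)

lemma exists_next {x y : Word} (h1 : x <+: y) (hlt : x.length < y.length) :
    ∃ a, x ++ [a] <+: y := by
  obtain ⟨t, rfl⟩ := h1
  cases t with
  | nil => simp at hlt
  | cons a t => exact ⟨a, t, by simp⟩

lemma prefix_of_snoc {q x : Word} {a : ℚ} (h1 : q ++ [a] <+: x) : q <+: x :=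
  (List.prefix_append q [a]).trans h1

lemma snoc_length {q x : Word} {a : ℚ} (h1 : q ++ [a] <+: x) : q.length < x.length := by
  have := h1.length_le
  simp at this
  omega

lemma next_unique {q x : Word} {a b : ℚ} (h1 : q ++ [a] <+: x) (h2 : q ++ [b] <+: x) :
    a = b := by
  have := (List.prefix_of_prefix_length_le h1 h2 (by simp)).eq_of_length (by simp)
  simpa using this

lemma snoc_prefix_of_lt {q x y : Word} {a : ℚ} (h1 : q ++ [a] <+: y) (h2 : x <+: y)
    (hlt : q.length < x.length) : q ++ [a] <+: x :=
  List.prefix_of_prefix_length_le h1 h2 (by simp; omega)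

/-- Two words that continue `q` with different letters have longest common prefix `q`. -/
lemma lcp_eq_of_branch_s13 {q x y : Word} {a b : ℚ} (hab : a ≠ b) (hx : q ++ [a] <+: x)
    (hy : q ++ [b] <+: y) : lcp x y = q := by
  refine (((prefix_lcp (prefix_of_snoc hx) (prefix_of_snoc hy)).eq_of_length_le ?_)).symm
  by_contra! hlt
  exact hab (next_unique (snoc_prefix_of_lt hx (lcp_prefix_left x y) hlt)
    (snoc_prefix_of_lt hy (lcp_prefix_right x y) hlt))

lemma not_prefix_of_branch {q x y : Word} {a b : ℚ} (hab : a ≠ b) (hx : q ++ [a] <+: x)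
    (hy : q ++ [b] <+: y) : ¬ x <+: y :=
  fun hxy => hab (next_unique (hx.trans hxy) hy)

/-- Two words are prefix-comparable or they branch at their longest common prefix. -/
lemma prefix_or_branch (x y : Word) :
    x <+: y ∨ y <+: x ∨ ∃ a b, a ≠ b ∧ lcp x y ++ [a] <+: x ∧ lcp x y ++ [b] <+: y := by
  have hl := lcp_prefix_left x y
  have hr := lcp_prefix_right x y
  by_cases hx : lcp x y = x
  · exact Or.inl (hx ▸ hr)
  by_cases hy : lcp x y = y
  · exact Or.inr (Or.inl (hy ▸ hl))
  obtain ⟨a, ha⟩ := exists_next hl (length_lt_of_prefix hl hx)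
  obtain ⟨b, hb⟩ := exists_next hr (length_lt_of_prefix hr hy)
  refine Or.inr (Or.inr ⟨a, b, ?_, ha, hb⟩)
  rintro rfl
  exact absurd (snoc_length (prefix_lcp ha hb)) (by simp)

lemma lexLe_of_lt {q x y : Word} {a b : ℚ} (hab : a < b) (hx : q ++ [a] <+: x)
    (hy : q ++ [b] <+: y) : lexLe x y :=
  Or.inr ⟨q, a, b, hab, hx, hy⟩

lemma not_lexLe_of_lt {q x y : Word} {a b : ℚ} (hab : a < b) (hx : q ++ [a] <+: x)
    (hy : q ++ [b] <+: y) : ¬ lexLe y x := by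
  rintro (hyx | ⟨p, c, d, hcd, hpy, hpx⟩)
  · exact not_prefix_of_branch hab.ne' hy hx hyx
  · have h1 := lcp_eq_of_branch_s13 hab.ne' hy hx
    have h2 := lcp_eq_of_branch_s13 hcd.ne hpy hpx
    obtain rfl : q = p := h1.symm.trans h2
    have h3 := next_unique hx hpx
    have h4 := next_unique hy hpy
    subst h3 h4
    exact absurd hab hcd.asymm

/-! ### The invariant of the one-point extension -/

/-- The number of elements of `R` lying strictly between `x` and `y` in the prefix order. -/
def between (R : Finset Word) (x y : Word) : ℕ :=
  (R.filter fun z => x <+: z ∧ z <+: y ∧ z ≠ x ∧ z ≠ y).card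

/-- Every branching of `x` and `y` at `q` is mapped by `h` to a branching of `h x` and `h y` at
`h q`, with the two branching letters in the same order. -/
def KeepsBranch (h : Word → Word) (x y : Word) : Prop :=
  ∀ q a b, a ≠ b → q ++ [a] <+: x → q ++ [b] <+: y →
    ∃ a' b', h q ++ [a'] <+: h x ∧ h q ++ [b'] <+: h y ∧ (a < b → a' < b') ∧ (b < a → b' < a')

lemma KeepsBranch.symm {h : Word → Word} {x y : Word} (H : KeepsBranch h x y) :
    KeepsBranch h y x := by
  intro q a b hab ha hb
  obtain ⟨b', a', h1, h2, h3, h4⟩ := H q b a hab.symm hb ha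
  exact ⟨a', b', h2, h1, h4, h3⟩

/-- `h` embeds `A`, and between the images of `x ≺ y` it leaves room for all the elements of the
set `R` of words still to be placed that lie strictly between `x` and `y`. -/
structure Roomy (A R : Finset Word) (h : Word → Word) : Prop where
  mono : ∀ x ∈ A, ∀ y ∈ A, x <+: y → x ≠ y →
    h x <+: h y ∧ (h x).length + between R x y < (h y).length
  branch : ∀ x ∈ A, ∀ y ∈ A, KeepsBranch h x y

lemma Roomy.mono' {A R : Finset Word} {h : Word → Word} (H : Roomy A R h) {x y : Word}
    (hx : x ∈ A) (hy : y ∈ A) (hxy : x <+: y) : h x <+: h y := by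
  by_cases e : x = y
  · rw [e]
  · exact (H.mono x hx y hy hxy e).1

/-- Choice of the letter `q'` that follows `h p` in the image of the new word `d`, where `p ∈ A`
is a proper prefix of `d` and `q` is the letter following `p` in `d`. If `d` has an extension in `A`
the letter is forced; otherwise density of `ℚ` gives one. -/
lemma exists_letter {A R : Finset Word} {h : Word → Word} (H : Roomy A R h)
    (hA : ∀ x ∈ A, ∀ y ∈ A, lcp x y ∈ A) {p d : Word} {q : ℚ} (hp : p ∈ A)
    (hd : p ++ [q] <+: d) :
    ∃ q', (∀ y ∈ A, d <+: y → h p ++ [q'] <+: h y) ∧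
      ∀ x ∈ A, ∀ c, c ≠ q → p ++ [c] <+: x →
        ∃ c', h p ++ [c'] <+: h x ∧ (c < q → c' < q') ∧ (q < c → q' < c') := by
  by_cases hex : ∃ y ∈ A, d <+: y
  · obtain ⟨y₀, hy₀, hdy₀⟩ := hex
    have hlt : ∀ y ∈ A, d <+: y → h p <+: h y ∧ (h p).length < (h y).length := by
      intro y hy hdy
      have hpy : p ++ [q] <+: y := hd.trans hdy
      obtain ⟨h1, h2⟩ := H.mono p hp y hy (prefix_of_snoc hpy)
        (fun e => absurd (snoc_length hpy) (by simp [e]))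
      exact ⟨h1, by omega⟩
    obtain ⟨q', hq'⟩ := exists_next (hlt y₀ hy₀ hdy₀).1 (hlt y₀ hy₀ hdy₀).2
    refine ⟨q', fun y hy hdy => ?_, fun x hx c hc hpx => ?_⟩
    · -- `y` and `y₀` share the letter after `p` because their common prefix lies in `A` above `d`
      have hm := hA y₀ hy₀ y hy
      have hdm := prefix_lcp hdy₀ hdy
      exact (snoc_prefix_of_lt hq' (H.mono' hm hy₀ (lcp_prefix_left _ _)) (hlt _ hm hdm).2).trans
        (H.mono' hm hy (lcp_prefix_right _ _))
    · obtain ⟨c', b', h1, h2, h3, h4⟩ := H.branch x hx y₀ hy₀ p c q hc hpx (hd.trans hdy₀)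
      obtain rfl := next_unique h2 hq'
      exact ⟨c', h1, h3, h4⟩
  · classical
    -- the letters following `h p` in the images of the words that leave `p` to the left,
    -- respectively to the right, of `q`
    let nxt : Word → ℚ := fun x => (h x).getD (h p).length 0
    have hnxt : ∀ x ∈ A, ∀ c, p ++ [c] <+: x → h p ++ [nxt x] <+: h x := by
      intro x hx c hc
      obtain ⟨h1, h2⟩ := H.mono p hp x hx (prefix_of_snoc hc)
        (fun e => absurd (snoc_length hc) (by simp [e]))
      obtain ⟨a, t, ht⟩ := exists_next h1 (by omega)
      have : nxt x = a := by
        simp only [nxt, ← ht]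
        simp
      rw [this]
      exact ⟨t, ht⟩
    obtain ⟨q', hlo, hhi⟩ := Order.exists_between_finsets
      (lo := (A.filter fun x => ∃ c, c < q ∧ p ++ [c] <+: x).image nxt)
      (hi := (A.filter fun x => ∃ c, q < c ∧ p ++ [c] <+: x).image nxt) (by
        intro u hu v hv
        simp only [Finset.mem_image, Finset.mem_filter] at hu hv
        obtain ⟨x, ⟨hx, c, hcq, hcx⟩, rfl⟩ := hu
        obtain ⟨y, ⟨hy, e, hqe, hey⟩, rfl⟩ := hv
        have hce : c < e := hcq.trans hqe
        obtain ⟨c', e', h1, h2, h3, -⟩ := H.branch x hx y hy p c e hce.ne hcx hey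
        rw [next_unique (hnxt x hx c hcx) h1, next_unique (hnxt y hy e hey) h2]
        exact h3 hce)
    refine ⟨q', fun y hy hdy => absurd ⟨y, hy, hdy⟩ hex, fun x hx c hc hpx => ?_⟩
    refine ⟨nxt x, hnxt x hx c hpx, fun hcq => hlo _ ?_, fun hqc => hhi _ ?_⟩
    · exact Finset.mem_image_of_mem _ (Finset.mem_filter.2 ⟨hx, c, hcq, hpx⟩)
    · exact Finset.mem_image_of_mem _ (Finset.mem_filter.2 ⟨hx, c, hqc, hpx⟩)

/-- One-point extension: `d` is a shortest word still to be placed, and its image is the image of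
its longest proper prefix in `A` followed by a single letter. -/
lemma Roomy.place {A R : Finset Word} {h : Word → Word} (H : Roomy A R h)
    (hA0 : ([] : Word) ∈ A) (hA : ∀ x ∈ A, ∀ y ∈ A, lcp x y ∈ A) {d : Word} (hdA : d ∉ A)
    (hdR : d ∈ R) (hmin : ∀ z ∈ R, d.length ≤ z.length)
    (hAd : ∀ x ∈ A, lcp x d ∈ A ∨ lcp x d = d) :
    ∃ h' : Word → Word, (∀ a ∈ A, h' a = h a) ∧ Roomy (insert d A) (R.erase d) h' := by
  classical
  obtain ⟨p, hpm, hpmax⟩ := (A.filter fun x => x <+: d).exists_max_image List.length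
    ⟨[], Finset.mem_filter.2 ⟨hA0, List.nil_prefix⟩⟩
  obtain ⟨hp, hpd⟩ := Finset.mem_filter.1 hpm
  have hbelow : ∀ x ∈ A, x <+: d → x <+: p := fun x hx hxd =>
    List.prefix_of_prefix_length_le hxd hpd (hpmax x (Finset.mem_filter.2 ⟨hx, hxd⟩))
  have hpne : p ≠ d := fun e => hdA (e ▸ hp)
  obtain ⟨q, hq⟩ := exists_next hpd (length_lt_of_prefix hpd hpne)
  obtain ⟨q', hup, hside⟩ := exists_letter H hA hp hq
  have hne : ∀ a ∈ A, a ≠ d := fun a ha e => hdA (e ▸ ha)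
  let h' : Word → Word := Function.update h d (h p ++ [q'])
  have hold : ∀ a ∈ A, h' a = h a := fun a ha => Function.update_of_ne (hne a ha) _ _
  have hnew : h' d = h p ++ [q'] := Function.update_self _ _ _
  have hkeep : ∀ x ∈ A, KeepsBranch h' x d := by
    intro x hx r a b hab hrx hrd
    have hr : r ∈ A := by
      have e := lcp_eq_of_branch_s13 hab hrx hrd
      rcases hAd x hx with h1 | h1
      · exact e ▸ h1
      · exact absurd (snoc_length hrd) (by rw [← e, h1]; simp)
    rw [hold x hx, hold r hr, hnew]
    have hrp := hbelow r hr (prefix_of_snoc hrd)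
    by_cases hrpe : r = p
    · subst hrpe
      obtain rfl := next_unique hrd hq
      obtain ⟨c', h1, h2, h3⟩ := hside x hx a hab hrx
      exact ⟨c', q', h1, List.prefix_rfl, h2, h3⟩
    · obtain ⟨a', b', h1, h2, h3⟩ := H.branch x hx p hp r a b hab hrx
        (snoc_prefix_of_lt hrd hpd (length_lt_of_prefix hrp hrpe))
      exact ⟨a', b', h1, h2.trans (List.prefix_append _ _), h3⟩
  refine ⟨h', hold, ⟨?_, ?_⟩⟩
  · intro x hx y hy hxy hxne
    rcases Finset.mem_insert.1 hx with rfl | hx' <;> rcases Finset.mem_insert.1 hy with rfl | hy'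
    · exact absurd rfl hxne
    · rw [hold y hy', hnew]
      refine ⟨hup y hy' hxy, ?_⟩
      have hpy : p <+: y := hpd.trans hxy
      have hpyne : p ≠ y := by
        rintro rfl
        exact hpne (prefix_antisymm_s13 hpd hxy)
      have h1 := (H.mono p hp y hy' hpy hpyne).2
      -- the new word itself accounts for the letter added after `h p`
      have h2 : between (R.erase x) x y < between R p y := by
        refine Finset.card_lt_card (Finset.ssubset_iff_of_subset ?_ |>.2 ⟨x, ?_, ?_⟩)
        · intro z hz
          simp only [Finset.mem_filter, Finset.mem_erase] at hz ⊢
          obtain ⟨⟨hzx, hzR⟩, hxz, hzy, -, hzy'⟩ := hz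
          refine ⟨hzR, hpd.trans hxz, hzy, ?_, hzy'⟩
          rintro rfl
          exact hpne (prefix_antisymm_s13 hpd hxz)
        · simp only [Finset.mem_filter]
          exact ⟨hdR, hpd, hxy, hpne.symm, hxne⟩
        · simp
      simp only [List.length_append, List.length_singleton]
      omega
    · rw [hold x hx', hnew]
      have h1 := H.mono' hx' hp (hbelow x hx' hxy)
      have h2 : between (R.erase y) x y = 0 := by
        refine Finset.card_eq_zero.2 (Finset.filter_eq_empty_iff.2 ?_)
        rintro z hz ⟨-, hzy, -, hzy'⟩
        have := length_lt_of_prefix hzy hzy'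
        have := hmin z (Finset.mem_of_mem_erase hz)
        omega
      have h3 := h1.length_le
      refine ⟨h1.trans (List.prefix_append _ _), ?_⟩
      simp only [List.length_append, List.length_singleton]
      omega
    · rw [hold x hx', hold y hy']
      obtain ⟨h1, h2⟩ := H.mono x hx' y hy' hxy hxne
      have h3 : between (R.erase d) x y ≤ between R x y :=
        Finset.card_le_card (Finset.filter_subset_filter _ (Finset.erase_subset d R))
      exact ⟨h1, by omega⟩
  · intro x hx y hy
    rcases Finset.mem_insert.1 hx with rfl | hx' <;> rcases Finset.mem_insert.1 hy with rfl | hy'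
    · intro r a b hab h1 h2
      exact absurd (next_unique h1 h2) hab
    · exact (hkeep y hy').symm
    · exact hkeep x hx'
    · intro r a b hab h1 h2
      have hr : r ∈ A := lcp_eq_of_branch_s13 hab h1 h2 ▸ hA x hx' y hy'
      rw [hold x hx', hold y hy', hold r hr]
      exact H.branch x hx' y hy' r a b hab h1 h2

/-- All the words of `R` can be placed, in order of increasing length. -/
lemma Roomy.extend (k : ℕ) : ∀ (R A : Finset Word) (h : Word → Word), R.card = k →
    Disjoint A R → ([] : Word) ∈ A → (∀ x ∈ A, ∀ y ∈ A, lcp x y ∈ A) →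
    (∀ x ∈ A ∪ R, ∀ y ∈ A ∪ R, lcp x y ∈ A ∪ R) → Roomy A R h →
    ∃ h' : Word → Word, (∀ a ∈ A, h' a = h a) ∧ Roomy (A ∪ R) ∅ h' := by
  induction k with
  | zero =>
    intro R A h hk _ _ _ _ H
    obtain rfl := Finset.card_eq_zero.1 hk
    exact ⟨h, fun _ _ => rfl, by simpa using H⟩
  | succ k ih =>
    intro R A h hk hdisj hA0 hA hAR H
    obtain ⟨d, hdR, hmin⟩ := R.exists_min_image List.length
      (Finset.card_pos.1 (by omega))
    have hdA : d ∉ A := fun hd => Finset.disjoint_left.1 hdisj hd hdR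
    -- a common prefix of `d` with anything is `d` or too short to lie in `R`
    have hAd : ∀ x ∈ A, lcp x d ∈ A ∨ lcp x d = d := by
      intro x hx
      rcases Finset.mem_union.1 (hAR x (Finset.mem_union_left _ hx) d
        (Finset.mem_union_right _ hdR)) with h1 | h1
      · exact Or.inl h1
      · exact Or.inr ((lcp_prefix_right x d).eq_of_length_le (hmin _ h1))
    obtain ⟨h₁, hh₁, H₁⟩ := H.place hA0 hA hdA hdR hmin hAd
    have hun : insert d A ∪ R.erase d = A ∪ R := by
      rw [Finset.insert_union, ← Finset.union_insert, Finset.insert_erase hdR]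
    have hcomm : ∀ x y : Word, lcp x y = lcp y x := fun x y => prefix_antisymm_s13
      (prefix_lcp (lcp_prefix_right _ _) (lcp_prefix_left _ _))
      (prefix_lcp (lcp_prefix_right _ _) (lcp_prefix_left _ _))
    have hmem : ∀ x ∈ A, lcp x d ∈ insert d A := fun x hx => by
      rcases hAd x hx with h1 | h1
      · exact Finset.mem_insert_of_mem h1
      · rw [h1]; exact Finset.mem_insert_self _ _
    obtain ⟨h₂, hh₂, H₂⟩ := ih (R.erase d) (insert d A) h₁
      (by rw [Finset.card_erase_of_mem hdR, hk]; rfl)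
      (by
        rw [Finset.disjoint_left]
        intro x hx hxR
        rcases Finset.mem_insert.1 hx with rfl | hx
        · simp at hxR
        · exact Finset.disjoint_left.1 hdisj hx (Finset.mem_of_mem_erase hxR))
      (Finset.mem_insert_of_mem hA0)
      (by
        intro x hx y hy
        rcases Finset.mem_insert.1 hx with hxd | hx' <;>
          rcases Finset.mem_insert.1 hy with hyd | hy'
        · rw [hxd, hyd, prefix_antisymm_s13 (lcp_prefix_left d d)
            (prefix_lcp List.prefix_rfl List.prefix_rfl)]
          exact Finset.mem_insert_self _ _
        · rw [hxd, hcomm]; exact hmem y hy'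
        · rw [hyd]; exact hmem x hx'
        · exact Finset.mem_insert_of_mem (hA x hx' y hy'))
      (by rw [hun]; exact hAR) H₁
    refine ⟨h₂, fun a ha => ?_, hun ▸ H₂⟩
    rw [hh₂ a (Finset.mem_insert_of_mem ha), hh₁ a ha]

/-- A roomy map is an embedding: the cases of `prefix_or_branch` are preserved, and they are
mutually exclusive in the target. -/
lemma Roomy.embedding {A R : Finset Word} {h : Word → Word} (H : Roomy A R h) :
    Set.InjOn h ↑A ∧ ∀ x ∈ A, ∀ y ∈ A,
      (x <+: y ↔ h x <+: h y) ∧ (lexLe x y ↔ lexLe (h x) (h y)) ∧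
        h (lcp x y) = lcp (h x) (h y) := by
  have hlcp : ∀ u v : Word, u <+: v → lcp u v = u ∧ lcp v u = u := fun u v huv =>
    ⟨prefix_antisymm_s13 (lcp_prefix_left _ _) (prefix_lcp List.prefix_rfl huv),
      prefix_antisymm_s13 (lcp_prefix_right _ _) (prefix_lcp huv List.prefix_rfl)⟩
  have hlex : ∀ u v : Word, u <+: v → u ≠ v → ¬ lexLe v u := by
    rintro u v huv hne (hvu | ⟨r, a, b, hab, h1, h2⟩)
    · exact hne (prefix_antisymm_s13 huv hvu)
    · exact hab.ne (next_unique h1 (h2.trans huv))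
  have main : ∀ x ∈ A, ∀ y ∈ A,
      (x <+: y ↔ h x <+: h y) ∧ (lexLe x y ↔ lexLe (h x) (h y)) ∧
        h (lcp x y) = lcp (h x) (h y) := by
    intro x hx y hy
    by_cases hxye : x = y
    · subst hxye
      simp [(hlcp _ _ (List.prefix_rfl (l := x))).1, (hlcp _ _ (List.prefix_rfl (l := h x))).1,
        lexLe]
    rcases prefix_or_branch x y with hxy | hyx | ⟨a, b, hab, ha, hb⟩
    · have h1 := H.mono' hx hy hxy
      refine ⟨iff_of_true hxy h1, iff_of_true (Or.inl hxy) (Or.inl h1), ?_⟩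
      rw [(hlcp _ _ hxy).1, (hlcp _ _ h1).1]
    · obtain ⟨h1, h2⟩ := H.mono y hy x hx hyx (Ne.symm hxye)
      have hne : h y ≠ h x := fun e => by rw [e] at h2; omega
      refine ⟨iff_of_false (fun e => hxye (prefix_antisymm_s13 e hyx))
        (fun e => hne (prefix_antisymm_s13 h1 e)),
        iff_of_false (hlex _ _ hyx (Ne.symm hxye)) (hlex _ _ h1 hne), ?_⟩
      rw [(hlcp _ _ hyx).2, (hlcp _ _ h1).2]
    · obtain ⟨a', b', h1, h2, h3, h4⟩ := H.branch x hx y hy _ a b hab ha hb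
      rcases lt_or_gt_of_ne hab with hlt | hlt
      · have hlt' := h3 hlt
        exact ⟨iff_of_false (not_prefix_of_branch hab ha hb) (not_prefix_of_branch hlt'.ne h1 h2),
          iff_of_true (lexLe_of_lt hlt ha hb) (lexLe_of_lt hlt' h1 h2),
          (lcp_eq_of_branch_s13 hlt'.ne h1 h2).symm⟩
      · have hlt' := h4 hlt
        exact ⟨iff_of_false (not_prefix_of_branch hab ha hb) (not_prefix_of_branch hlt'.ne' h1 h2),
          iff_of_false (not_lexLe_of_lt hlt hb ha) (not_lexLe_of_lt hlt' h2 h1),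
          (lcp_eq_of_branch_s13 hlt'.ne' h1 h2).symm⟩
  refine ⟨fun x hx y hy e => prefix_antisymm_s13 ?_ ?_, main⟩
  · exact (main x hx y hy).1.2 (by rw [e])
  · exact (main y hy x hx).1.2 (by rw [e])

/-- The gap extension lemma: an embedding of a finite lcp-closed set `A` whose image has
`n`-gaps above the image of `B ⊆ A` extends to any `D` adding at most `n` new elements,
with `A ∪ D` lcp-closed and no element of `D` a prefix of an element of `B`. -/
theorem stmt13 (n : ℕ) (A B D : Finset Word)
    (hA0 : ([] : Word) ∈ A)
    (hAlcp : ∀ x ∈ A, ∀ y ∈ A, lcp x y ∈ A)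
    (hBA : B ⊆ A)
    (h : Word → Word)
    (hinj : Set.InjOn h ↑A)
    (hpre : ∀ x ∈ A, ∀ y ∈ A, (x <+: y ↔ h x <+: h y))
    (hlex : ∀ x ∈ A, ∀ y ∈ A, (lexLe x y ↔ lexLe (h x) (h y)))
    (hcap : ∀ x ∈ A, ∀ y ∈ A, h (lcp x y) = lcp (h x) (h y))
    (hgaps : HasGaps n (h '' ↑A) (h '' ↑B))
    (hDcard : (D \ A).card ≤ n)
    (hDlcp : ∀ x ∈ A ∪ D, ∀ y ∈ A ∪ D, lcp x y ∈ A ∪ D)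
    (hDB : ∀ d ∈ D, ∀ b ∈ B, ¬ d <+: b) :
    ∃ h' : Word → Word,
      (∀ a ∈ A, h' a = h a) ∧
      Set.InjOn h' ↑(A ∪ D) ∧
      (∀ x ∈ A ∪ D, ∀ y ∈ A ∪ D,
        (x <+: y ↔ h' x <+: h' y) ∧
        (lexLe x y ↔ lexLe (h' x) (h' y)) ∧
        h' (lcp x y) = lcp (h' x) (h' y)) := by
  have hbr : ∀ x ∈ A, ∀ y ∈ A, ∀ q a b, a < b → q ++ [a] <+: x → q ++ [b] <+: y →
      ∃ a' b', h q ++ [a'] <+: h x ∧ h q ++ [b'] <+: h y ∧ a' < b' := by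
    intro x hx y hy q a b hab ha hb
    have hq := lcp_eq_of_branch_s13 hab.ne ha hb
    rcases (hlex x hx y hy).1 (lexLe_of_lt hab ha hb) with h1 | ⟨r, a', b', hab', h1, h2⟩
    · exact absurd ((hpre x hx y hy).2 h1) (not_prefix_of_branch hab.ne ha hb)
    · have e : h q = r := by rw [← hq, hcap x hx y hy, lcp_eq_of_branch_s13 hab'.ne h1 h2]
      exact ⟨a', b', e ▸ h1, e ▸ h2, hab'⟩
  have H : Roomy A (D \ A) h := by
    refine ⟨fun x hx y hy hxy hne => ⟨(hpre x hx y hy).1 hxy, ?_⟩, fun x hx y hy => ?_⟩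
    · have hne' : h x ≠ h y := fun e => hne (hinj hx hy e)
      by_cases hyB : ∃ b ∈ B, y <+: b
      · -- below `B` no new words are inserted, so a gap of length one is enough
        obtain ⟨b, hb, hyb⟩ := hyB
        have h0 : between (D \ A) x y = 0 := by
          refine Finset.card_eq_zero.2 (Finset.filter_eq_empty_iff.2 ?_)
          rintro z hz ⟨-, hzy, -, -⟩
          exact hDB z (Finset.mem_sdiff.1 hz).1 b hb (hzy.trans hyb)
        rw [h0]
        exact length_lt_of_prefix ((hpre x hx y hy).1 hxy) hne'
      · have h1 := hgaps (h x) ⟨x, hx, rfl⟩ (h y) ⟨y, hy, rfl⟩ ((hpre x hx y hy).1 hxy) hne' (by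
          rintro _ ⟨b, hb, rfl⟩ hyb
          exact hyB ⟨b, hb, (hpre y hy b (hBA hb)).2 hyb⟩)
        have h2 : between (D \ A) x y ≤ (D \ A).card := Finset.card_filter_le _ _
        omega
    · intro q a b hab ha hb
      rcases lt_or_gt_of_ne hab with hlt | hlt
      · obtain ⟨a', b', h1, h2, h3⟩ := hbr x hx y hy q a b hlt ha hb
        exact ⟨a', b', h1, h2, fun _ => h3, fun h4 => absurd h4 hlt.asymm⟩
      · obtain ⟨b', a', h1, h2, h3⟩ := hbr y hy x hx q b a hlt hb ha
        exact ⟨a', b', h2, h1, fun h4 => absurd h4 hlt.asymm, fun _ => h3⟩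
  have hun : A ∪ (D \ A) = A ∪ D := Finset.union_sdiff_self_eq_union
  obtain ⟨h', hh', H'⟩ := Roomy.extend _ (D \ A) A h rfl Finset.disjoint_sdiff hA0 hAlcp
    (by rw [hun]; exact hDlcp) H
  rw [hun] at H'
  exact ⟨h', hh', H'.embedding⟩

end CLTL
end

section
/- Let w̄, v̄ be n-tuples of words such that MCAT_C(w̄, v̄) has 2n-gaps above (the set of entries of) C, and let x̄, ȳ, z̄ be n-tuples of words with typ_C(x̄, ȳ) = typ_C(w̄, v̄) (as 2n-tuples). Then there exists an n-tuple ū of words with typ_C(w̄, v̄, ū) = typ_C(x̄, ȳ, z̄) (as 3n-tuples); in particular typ_C(v̄, ū) = typ_C(ȳ, z̄) and typ_C(w̄, ū) = typ_C(x̄, z̄). -/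
/-!
The tree `MCAT C w` is the closure of `ε`, the constants and the entries of `w` under longest
common prefixes, so equality of types amounts to an injection preserving `ε`, meets and the
left-to-right branching relation `Br`, and matching constants and entries. Let
`A = MCAT C (x, y)`, `S = MCAT C (x, y, z)` and let `h : A → MCAT C (w, v)` be the given
isomorphism. It is extended to all of `S`, and `u i` is the image of `z i`; the three type
equalities come from the same extended map (`Good.sameTyp`).

The extension adds elements of `S \ A` one at a time, in order of length, which keeps the domain
meet-closed. With `rk S t` the number of prefixes of `t` in `S`, the invariant (`Good`) is that
for `d ≼ e` in the domain the images differ in length by at least `rk S e - rk S d`. A new element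
lying on a path of the domain fits into the image path because of this room
(`Good.extend_below`); a new leaf is attached to the image of its predecessor by a rational letter
chosen by density (`Good.extend_leaf`). In both cases the new image is one letter longer than that
of the predecessor, so the invariant persists.

The invariant holds for `h` itself (`room_of_gaps`): each `z i` adds at most two nodes, so
`|S \ A| ≤ 2n`, and a step of the tree not leading to a constant is longer than `2n`. Steps leading
to a constant stay within the prefix-closed set of constants, which `h` fixes pointwise, and there
the room needed is at most the difference in length.
-/

namespace CLTL

/-! ### Prefixes, meets and branching -/

/-- `a` branches off strictly to the left of `b`: the non-prefix alternative of `lexLe`. -/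
def Br (a b : Word) : Prop :=
  ∃ (p : Word) (q₁ q₂ : ℚ), q₁ < q₂ ∧ (p ++ [q₁]) <+: a ∧ (p ++ [q₂]) <+: b

theorem prefix_antisymm_s14 {a b : Word} (h : a <+: b) (h' : b <+: a) : a = b :=
  h.eq_of_length_le h'.length_le

theorem prefix_total {a b c : Word} (h : a <+: c) (h' : b <+: c) : a <+: b ∨ b <+: a :=
  List.prefix_or_prefix_of_prefix h h'

theorem prefix_lcp_s14 {t : Word} : ∀ {a b : Word}, t <+: lcp a b ↔ t <+: a ∧ t <+: b := by
  induction t with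
  | nil => intro a b; simp
  | cons q t ih =>
    intro a b
    cases a with
    | nil => simp [lcp]
    | cons x a =>
      cases b with
      | nil => simp [lcp]
      | cons y b =>
        by_cases hxy : x = y
        · subst hxy
          simp only [lcp, if_true, List.cons_prefix_cons, ih]; tauto
        · simp only [lcp, if_neg hxy, List.cons_prefix_cons, List.prefix_nil]
          constructor
          · intro h; cases h
          · rintro ⟨⟨rfl, -⟩, rfl, -⟩; exact absurd rfl hxy

theorem lcp_left (a b : Word) : lcp a b <+: a := (prefix_lcp_s14.1 (List.prefix_refl _)).1
theorem lcp_right (a b : Word) : lcp a b <+: b := (prefix_lcp_s14.1 (List.prefix_refl _)).2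

theorem word_ext {a b : Word} (h : ∀ t, t <+: a ↔ t <+: b) : a = b :=
  prefix_antisymm_s14 ((h a).1 (List.prefix_refl _)) ((h b).2 (List.prefix_refl _))

theorem lcp_comm'_s14 (a b : Word) : lcp a b = lcp b a :=
  word_ext fun t => by rw [prefix_lcp_s14, prefix_lcp_s14, and_comm]

theorem lcp_eq_left_s14 {a b : Word} : lcp a b = a ↔ a <+: b := by
  constructor
  · intro h; have := lcp_right a b; rwa [h] at this
  · intro h
    exact prefix_antisymm_s14 (lcp_left a b) (prefix_lcp_s14.2 ⟨List.prefix_refl _, h⟩)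

theorem lcp_eq_right {a b : Word} : lcp a b = b ↔ b <+: a := by
  rw [lcp_comm'_s14, lcp_eq_left_s14]

theorem lcp_self (a : Word) : lcp a a = a := lcp_eq_left_s14.2 (List.prefix_refl _)

/-- If `s ≼ e` and `s ⋠ a`, then `a` leaves `s` exactly where it leaves `e`. -/
theorem lcp_of_not_prefix {s e a : Word} (h : s <+: e) (h' : ¬ s <+: a) :
    lcp s a = lcp e a := by
  refine prefix_antisymm_s14 (prefix_lcp_s14.2 ⟨(lcp_left _ _).trans h, lcp_right _ _⟩)
    (prefix_lcp_s14.2 ⟨?_, lcp_right _ _⟩)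
  rcases prefix_total (lcp_left e a) h with h1 | h1
  · exact h1
  · exact absurd (h1.trans (lcp_right _ _)) h'

theorem Br_nil_left (b : Word) : ¬ Br [] b := by
  rintro ⟨p, a, b, -, h, -⟩; simp at h

theorem Br_nil_right (b : Word) : ¬ Br b [] := by
  rintro ⟨p, a, b, -, -, h⟩; simp at h

theorem Br_cons (a b : ℚ) (l m : Word) : Br (a :: l) (b :: m) ↔ a < b ∨ a = b ∧ Br l m := by
  constructor
  · rintro ⟨p, q₁, q₂, hq, h1, h2⟩
    cases p with
    | nil =>
      simp at h1 h2
      subst h1 h2; exact Or.inl hq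
    | cons r p =>
      simp only [List.cons_append, List.cons_prefix_cons] at h1 h2
      exact Or.inr ⟨h1.1.symm.trans h2.1, p, q₁, q₂, hq, h1.2, h2.2⟩
  · rintro (h | ⟨rfl, p, q₁, q₂, hq, h1, h2⟩)
    · exact ⟨[], a, b, h, by simp, by simp⟩
    · exact ⟨a :: p, q₁, q₂, hq, by simpa using h1, by simpa using h2⟩

theorem Br_trichotomy : ∀ a b : Word, a <+: b ∨ b <+: a ∨ Br a b ∨ Br b a
  | [], b => Or.inl (List.nil_prefix)
  | _ :: _, [] => Or.inr (Or.inl (List.nil_prefix))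
  | x :: a, y :: b => by
    have ih := Br_trichotomy a b
    simp only [List.cons_prefix_cons, Br_cons]
    rcases lt_trichotomy x y with h | rfl | h <;> tauto

theorem Br.not_prefix : ∀ {a b : Word}, Br a b → ¬ a <+: b
  | [], b, h => absurd h (Br_nil_left b)
  | _ :: _, [], h => absurd h (Br_nil_right _)
  | x :: a, y :: b, h => by
    rw [Br_cons] at h
    rw [List.cons_prefix_cons]
    rintro ⟨rfl, h'⟩
    rcases h with h | ⟨-, h⟩
    · exact lt_irrefl _ h
    · exact h.not_prefix h'

theorem Br.not_prefix' : ∀ {a b : Word}, Br a b → ¬ b <+: a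
  | [], b, h => absurd h (Br_nil_left b)
  | _ :: _, [], h => absurd h (Br_nil_right _)
  | x :: a, y :: b, h => by
    rw [Br_cons] at h
    rw [List.cons_prefix_cons]
    rintro ⟨rfl, h'⟩
    rcases h with h | ⟨-, h⟩
    · exact lt_irrefl _ h
    · exact h.not_prefix' h'

theorem Br.asymm : ∀ {a b : Word}, Br a b → ¬ Br b a
  | [], b, h => absurd h (Br_nil_left b)
  | _ :: _, [], h => absurd h (Br_nil_right _)
  | x :: a, y :: b, h => by
    rw [Br_cons] at h ⊢
    rintro (h' | ⟨rfl, h'⟩) <;> rcases h with h | ⟨h1, h⟩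
    · exact lt_asymm h h'
    · exact absurd h' (by rw [h1]; exact lt_irrefl _)
    · exact lt_irrefl _ h
    · exact h.asymm h'

theorem Br.trans : ∀ {a b c : Word}, Br a b → Br b c → Br a c
  | [], b, _, h, _ => absurd h (Br_nil_left b)
  | _ :: _, [], _, h, _ => absurd h (Br_nil_right _)
  | _ :: _, _ :: _, [], _, h => absurd h (Br_nil_right _)
  | x :: a, y :: b, z :: c, h, h' => by
    rw [Br_cons] at h h' ⊢
    rcases h with h | ⟨rfl, h⟩ <;> rcases h' with h' | ⟨rfl, h'⟩
    · exact Or.inl (h.trans h')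
    · exact Or.inl h
    · exact Or.inl h'
    · exact Or.inr ⟨rfl, h.trans h'⟩

theorem Br.mono {a b a' b' : Word} (h : Br a b) (ha : a <+: a') (hb : b <+: b') : Br a' b' := by
  obtain ⟨p, q₁, q₂, hq, h1, h2⟩ := h
  exact ⟨p, q₁, q₂, hq, h1.trans ha, h2.trans hb⟩

theorem Br.shrink_right {a s d : Word} (h : Br a s) (hd : d <+: s) : d <+: a ∨ Br a d := by
  rcases Br_trichotomy a d with h1 | h1 | h1 | h1
  · exact absurd (h1.trans hd) h.not_prefix
  · exact Or.inl h1
  · exact Or.inr h1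
  · exact absurd (h1.mono hd (List.prefix_refl _)) h.asymm

theorem Br.shrink_left {a s d : Word} (h : Br s a) (hd : d <+: s) : d <+: a ∨ Br d a := by
  rcases Br_trichotomy a d with h1 | h1 | h1 | h1
  · exact absurd (h1.trans hd) h.not_prefix'
  · exact Or.inl h1
  · exact absurd (h1.mono (List.prefix_refl _) hd) h.asymm
  · exact Or.inr h1

/-- The letter of `b` at position `|p|`; meaningful when `p` is a proper prefix of `b`. -/
def letter (p b : Word) : ℚ := (b.drop p.length).headD 0

theorem letter_prefix {p b : Word} (h : p <+: b) (hne : p ≠ b) : p ++ [letter p b] <+: b := by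
  obtain ⟨t, rfl⟩ := h
  cases t with
  | nil => simp at hne
  | cons q t => simp [letter]

theorem letter_unique_s14 {p b : Word} {q q' : ℚ} (h : p ++ [q] <+: b) (h' : p ++ [q'] <+: b) :
    q = q' := by
  have := List.prefix_of_prefix_length_le h h' (by simp)
  simpa using this

theorem lcp_concat {p b : Word} {q : ℚ} (h : ¬ p ++ [q] <+: b) : lcp (p ++ [q]) b = lcp p b := by
  refine word_ext fun t => ?_
  rw [prefix_lcp_s14, prefix_lcp_s14, List.prefix_concat_iff]
  constructor
  · rintro ⟨rfl | h1, h2⟩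
    · exact absurd h2 h
    · exact ⟨h1, h2⟩
  · rintro ⟨h1, h2⟩; exact ⟨Or.inr h1, h2⟩

/-! ### Maximal common ancestor trees as meet-closures -/

/-- Closure under longest common prefixes. -/
def MeetClosed (A : Set Word) : Prop := ∀ a ∈ A, ∀ b ∈ A, lcp a b ∈ A

theorem prefix_listLCP {t : Word} : ∀ {l : List Word}, l ≠ [] →
    (t <+: listLCP l ↔ ∀ a ∈ l, t <+: a)
  | [], h => absurd rfl h
  | [x], _ => by simp [listLCP]
  | x :: y :: l, _ => by
    rw [listLCP, prefix_lcp_s14, prefix_listLCP (by simp)]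
    · simp
    · simp

theorem listLCP_mem {T : Set Word} (hT : MeetClosed T) : ∀ {l : List Word}, l ≠ [] →
    (∀ a ∈ l, a ∈ T) → listLCP l ∈ T
  | [], h, _ => absurd rfl h
  | [x], _, h => by simpa [listLCP] using h
  | x :: y :: l, _, h => by
    rw [listLCP]
    · exact hT _ (h x (by simp)) _ (listLCP_mem hT (by simp) fun a ha => h a (by simp_all))
    · simp

section
variable {C : List Word} {k : ℕ} {w : Fin k → Word}

theorem prefix_finLCP {K : ℕ} (a : Fin K → Word) (I : Finset (Fin K)) (hI : I.Nonempty)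
    (t : Word) : t <+: listLCP (I.toList.map a) ↔ ∀ i ∈ I, t <+: a i := by
  rw [prefix_listLCP]
  · simp
  · simpa using hI.ne_empty

theorem MCAT_entry (i : Fin (k + C.length)) : Fin.append w C.get i ∈ MCAT C w :=
  Or.inr ⟨{i}, by simp, by simp [listLCP]⟩

theorem MCAT_word (i : Fin k) : w i ∈ MCAT C w := by
  simpa using MCAT_entry (C := C) (w := w) (Fin.castAdd _ i)

theorem MCAT_const {c : Word} (hc : c ∈ C) : c ∈ MCAT C w := by
  obtain ⟨i, rfl⟩ := List.get_of_mem hc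
  simpa using MCAT_entry (C := C) (w := w) (Fin.natAdd _ i)

theorem MCAT_nil : [] ∈ MCAT C w := Or.inl rfl

theorem MCAT_meetClosed : MeetClosed (MCAT C w) := by
  rintro a (rfl | ⟨I, hI, rfl⟩) b hb
  · exact Or.inl (by simp [lcp])
  · rcases hb with rfl | ⟨J, hJ, rfl⟩
    · left; exact List.prefix_nil.1 (lcp_right _ _)
    · classical
      refine Or.inr ⟨I ∪ J, hI.mono Finset.subset_union_left, word_ext fun t => ?_⟩
      rw [prefix_lcp_s14, prefix_finLCP _ _ hI, prefix_finLCP _ _ hJ,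
        prefix_finLCP _ _ (hI.mono Finset.subset_union_left)]
      simp only [Finset.mem_union]
      exact ⟨fun h i hi => hi.elim (h.1 i) (h.2 i), fun h => ⟨fun i hi => h i (Or.inl hi),
        fun i hi => h i (Or.inr hi)⟩⟩

theorem MCAT_subset {T : Set Word} (hT : MeetClosed T) (h0 : [] ∈ T) (hC : ∀ c ∈ C, c ∈ T)
    (hw : ∀ i, w i ∈ T) : MCAT C w ⊆ T := by
  rintro a (rfl | ⟨I, hI, rfl⟩)
  · exact h0
  · refine listLCP_mem hT (by simpa using hI.ne_empty) ?_
    intro a ha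
    simp only [List.mem_map] at ha
    obtain ⟨i, -, rfl⟩ := ha
    refine Fin.addCases (fun i => ?_) (fun i => ?_) i
    · simpa using hw i
    · simpa using hC _ (List.get_mem C i)

theorem MCAT_finite : (MCAT C w).Finite := by
  refine Set.Finite.insert _ ((Set.finite_range fun I : Finset (Fin (k + C.length)) =>
    listLCP (I.toList.map (Fin.append w C.get))).subset ?_)
  rintro a ⟨I, -, rfl⟩
  exact ⟨I, rfl⟩

end

/-! ### Counting the new nodes -/

/-- Adding one word to a finite meet-closed set creates at most two new nodes: the word itself
and the point where it leaves the set. -/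
theorem exists_meetClosed_insert (A : Finset Word) (hA : MeetClosed A) (hne : A.Nonempty)
    (z : Word) : ∃ B : Finset Word, A ⊆ B ∧ z ∈ B ∧ MeetClosed B ∧ B.card ≤ A.card + 2 := by
  classical
  obtain ⟨a₀, ha₀, hmax⟩ := A.exists_max_image (fun a => (lcp z a).length) hne
  set m := lcp z a₀ with hm
  have hmz : m <+: z := lcp_left _ _
  have hma : m <+: a₀ := lcp_right _ _
  have hle : ∀ a ∈ A, lcp z a <+: m := fun a ha =>
    List.prefix_of_prefix_length_le (lcp_left _ _) hmz (hmax a ha)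
  have key : ∀ a ∈ A, lcp m a = m ∨ lcp m a ∈ A := by
    intro a ha
    by_cases h : m <+: a
    · exact Or.inl (lcp_eq_left_s14.2 h)
    · right; rw [lcp_of_not_prefix hma h]; exact hA _ ha₀ _ ha
  have key2 : ∀ a ∈ A, lcp z a = m ∨ lcp z a ∈ A := by
    intro a ha
    have : lcp z a = lcp m a := prefix_antisymm_s14 (prefix_lcp_s14.2 ⟨hle a ha, lcp_right _ _⟩)
      (prefix_lcp_s14.2 ⟨(lcp_left _ _).trans hmz, lcp_right _ _⟩)
    rw [this]; exact key a ha
  refine ⟨insert z (insert m A), fun a ha => by simp [ha], by simp, ?_, ?_⟩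
  · intro a ha b hb
    simp only [Finset.coe_insert, Set.mem_insert_iff, Finset.mem_coe] at ha hb ⊢
    rcases ha with rfl | rfl | ha <;> rcases hb with rfl | rfl | hb
    · left; exact lcp_self _
    · right; left; exact lcp_eq_right.2 hmz
    · right; exact key2 b hb
    · right; left; exact lcp_eq_left_s14.2 hmz
    · right; left; exact lcp_self _
    · right; exact key b hb
    · right; rw [lcp_comm'_s14]; exact key2 a ha
    · right; rw [lcp_comm'_s14]; exact key a ha
    · right; right; exact hA a ha b hb
  · exact (Finset.card_insert_le _ _).trans
      (Nat.succ_le_succ (Finset.card_insert_le _ _))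

theorem exists_meetClosed_union {n : ℕ} (z : Fin n → Word) (A : Finset Word) (hA : MeetClosed A)
    (hne : A.Nonempty) : ∃ B : Finset Word, A ⊆ B ∧ (∀ i, z i ∈ B) ∧ MeetClosed B ∧
      B.card ≤ A.card + 2 * n := by
  induction n with
  | zero => exact ⟨A, subset_rfl, fun i => i.elim0, hA, by simp⟩
  | succ n ih =>
    obtain ⟨B, hAB, hz, hB, hc⟩ := ih (fun i => z i.castSucc)
    obtain ⟨D, hBD, hz', hD, hc'⟩ := exists_meetClosed_insert B hB (hne.mono hAB) (z (Fin.last n))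
    refine ⟨D, hAB.trans hBD, fun i => ?_, hD, by omega⟩
    refine Fin.lastCases hz' (fun i => hBD (hz i)) i

/-! ### Extending partial isomorphisms -/

/-- The number of prefixes of `t` in `S`. -/
def rk (S : Finset Word) (t : Word) : ℕ := (S.filter (· <+: t)).card

theorem rk_lt {S : Finset Word} {d e : Word} (he : e ∈ S) (h : d <+: e) (hne : d ≠ e) :
    rk S d < rk S e := by
  refine Finset.card_lt_card (Finset.ssubset_iff.2 ⟨e, ?_, ?_⟩)
  · simp only [Finset.mem_filter, not_and]
    exact fun _ h' => hne (prefix_antisymm_s14 h h')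
  · intro t ht
    simp only [Finset.mem_insert, Finset.mem_filter] at ht ⊢
    rcases ht with rfl | ht
    · exact ⟨he, List.prefix_refl _⟩
    · exact ⟨ht.1, ht.2.trans h⟩

/-- `g` embeds the meet-closed set `A ⊆ S`, respecting meets and branching, and leaves between
the images of `d ≼ e` enough room for all elements of `S` on the path from `d` to `e`. -/
structure Good (S A : Finset Word) (g : Word → Word) : Prop where
  sub : A ⊆ S
  closed : MeetClosed A
  meet : ∀ a ∈ A, ∀ b ∈ A, g (lcp a b) = lcp (g a) (g b)
  br : ∀ a ∈ A, ∀ b ∈ A, Br a b → Br (g a) (g b)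
  room : ∀ d ∈ A, ∀ e ∈ A, d <+: e → (g d).length + rk S e ≤ (g e).length + rk S d

namespace Good
variable {S A : Finset Word} {g : Word → Word}

theorem mono (hg : Good S A g) {a b : Word} (ha : a ∈ A) (hb : b ∈ A) (h : a <+: b) :
    g a <+: g b := by
  rw [← lcp_eq_left_s14, ← hg.meet a ha b hb, lcp_eq_left_s14.2 h]

theorem length_lt (hg : Good S A g) {a b : Word} (ha : a ∈ A) (hb : b ∈ A) (h : a <+: b)
    (hne : a ≠ b) : (g a).length < (g b).length := by
  have h1 := hg.room a ha b hb h
  have h2 := rk_lt (hg.sub hb) h hne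
  omega

theorem reflect (hg : Good S A g) {a b : Word} (ha : a ∈ A) (hb : b ∈ A) (h : g a <+: g b) :
    a <+: b := by
  by_contra hab
  have h1 := hg.length_lt (hg.closed a ha b hb) ha (lcp_left a b)
    (fun h => hab (lcp_eq_left_s14.1 h))
  rw [hg.meet a ha b hb, lcp_eq_left_s14.2 h] at h1
  exact lt_irrefl _ h1

theorem inj (hg : Good S A g) : Set.InjOn g A := fun a ha b hb h =>
  prefix_antisymm_s14 (hg.reflect ha hb (by rw [h])) (hg.reflect hb ha (by rw [h]))

/-- Extension of a good map by one element `s` with prescribed image `v`. -/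
theorem insert_update (hg : Good S A g) {s v : Word} (hs : s ∈ S) (hsA : s ∉ A)
    (hcl : ∀ a ∈ A, ¬ s <+: a → lcp s a ∈ A)
    (hm1 : ∀ a ∈ A, s <+: a → v <+: g a)
    (hm2 : ∀ a ∈ A, ¬ s <+: a → g (lcp s a) = lcp v (g a))
    (hb1 : ∀ a ∈ A, Br a s → Br (g a) v) (hb2 : ∀ a ∈ A, Br s a → Br v (g a))
    (hr1 : ∀ a ∈ A, a <+: s → (g a).length + rk S s ≤ v.length + rk S a)
    (hr2 : ∀ a ∈ A, s <+: a → v.length + rk S a ≤ (g a).length + rk S s) :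
    Good S (insert s A) (Function.update g s v) := by
  have hu : ∀ a ∈ A, Function.update g s v a = g a := fun a ha =>
    Function.update_of_ne (fun h => hsA (by rwa [h] at ha)) _ _
  have hus : Function.update g s v s = v := Function.update_self _ _ _
  have hms : ∀ a ∈ A, Function.update g s v (lcp s a) = lcp v (g a) := by
    intro a ha
    by_cases h : s <+: a
    · rw [lcp_eq_left_s14.2 h, hus, lcp_eq_left_s14.2 (hm1 a ha h)]
    · rw [hu _ (hcl a ha h), hm2 a ha h]
  have hcs : ∀ a ∈ A, lcp s a ∈ insert s A := by
    intro a ha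
    by_cases h : s <+: a
    · rw [lcp_eq_left_s14.2 h]; exact Finset.mem_insert_self _ _
    · exact Finset.mem_insert_of_mem (hcl a ha h)
  refine ⟨?_, ?_, ?_, ?_, ?_⟩
  · exact Finset.insert_subset hs hg.sub
  · intro a ha b hb
    rw [Finset.mem_coe] at *
    rcases Finset.mem_insert.1 ha with rfl | ha' <;> rcases Finset.mem_insert.1 hb with rfl | hb'
    · rw [lcp_self]; exact Finset.mem_insert_self _ _
    · exact hcs b hb'
    · rw [lcp_comm'_s14]; exact hcs a ha'
    · exact Finset.mem_insert_of_mem (hg.closed a ha' b hb')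
  · intro a ha b hb
    rcases Finset.mem_insert.1 ha with rfl | ha' <;> rcases Finset.mem_insert.1 hb with rfl | hb'
    · rw [lcp_self, lcp_self]
    · rw [hms b hb', hus, hu b hb']
    · rw [lcp_comm'_s14, hms a ha', hus, hu a ha', lcp_comm'_s14]
    · rw [hu a ha', hu b hb', hu _ (hg.closed a ha' b hb'), hg.meet a ha' b hb']
  · intro a ha b hb h
    rcases Finset.mem_insert.1 ha with rfl | ha' <;> rcases Finset.mem_insert.1 hb with rfl | hb'
    · exact absurd h h.asymm
    · rw [hus, hu b hb']; exact hb2 b hb' h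
    · rw [hus, hu a ha']; exact hb1 a ha' h
    · rw [hu a ha', hu b hb']; exact hg.br a ha' b hb' h
  · intro a ha b hb h
    rcases Finset.mem_insert.1 ha with rfl | ha' <;> rcases Finset.mem_insert.1 hb with rfl | hb'
    · exact le_rfl
    · rw [hus, hu b hb']; exact hr2 b hb' h
    · rw [hus, hu a ha']; exact hr1 a ha' h
    · rw [hu a ha', hu b hb']; exact hg.room a ha' b hb' h

/-- The new element `s` lies on the path to some `e ∈ A`: place it one letter beyond the image
of its predecessor `d`, on the path to the image of the least such `e`. -/
theorem extend_below (hg : Good S A g) {s d e : Word} (hs : s ∈ S) (hsA : s ∉ A)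
    (hcl : ∀ a ∈ A, ¬ s <+: a → lcp s a ∈ A)
    (hd : d ∈ A) (hds : d <+: s) (hmax : ∀ a ∈ A, a <+: s → a <+: d)
    (hrk : rk S s = rk S d + 1) (he : e ∈ A) (hse : s <+: e) (hmin : ∀ a ∈ A, s <+: a → e <+: a) :
    ∃ v, Good S (insert s A) (Function.update g s v) := by
  have hlen := hg.room d hd e he (hds.trans hse)
  have hrk2 : rk S s < rk S e := rk_lt (hg.sub he) hse (fun h => hsA (h ▸ he))
  have hde := hg.mono hd he (hds.trans hse)
  set v := (g e).take ((g d).length + 1) with hv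
  have hvlen : v.length = (g d).length + 1 := by rw [hv, List.length_take]; omega
  have hve : v <+: g e := List.take_prefix _ _
  have hdv : g d <+: v := List.prefix_of_prefix_length_le hde hve (by omega)
  have hnot : ∀ a ∈ A, ¬ s <+: a → g (lcp s a) <+: g d := fun a ha h =>
    hg.mono (hcl a ha h) hd (hmax _ (hcl a ha h) (lcp_left _ _))
  have hm2 : ∀ a ∈ A, ¬ s <+: a → g (lcp s a) = lcp v (g a) := by
    intro a ha h
    have h1 := hnot a ha h
    rw [lcp_of_not_prefix hse h, hg.meet e he a ha] at *
    refine prefix_antisymm_s14 (prefix_lcp_s14.2 ⟨h1.trans hdv, lcp_right _ _⟩)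
      (prefix_lcp_s14.2 ⟨(lcp_left _ _).trans hve, lcp_right _ _⟩)
  have hnp : ∀ a ∈ A, ¬ s <+: a → ¬ v <+: g a := by
    intro a ha h h'
    have h1 := (hnot a ha h).length_le
    rw [hm2 a ha h, lcp_eq_left_s14.2 h'] at h1
    omega
  refine ⟨v, hg.insert_update hs hsA hcl ?_ hm2 ?_ ?_ ?_ ?_⟩
  · exact fun a ha h => hve.trans (hg.mono he ha (hmin a ha h))
  · intro a ha h
    exact ((hg.br a ha e he (h.mono (List.prefix_refl _) hse)).shrink_right hve).resolve_left
      (hnp a ha h.not_prefix')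
  · intro a ha h
    exact ((hg.br e he a ha (h.mono hse (List.prefix_refl _))).shrink_left hve).resolve_left
      (hnp a ha h.not_prefix)
  · intro a ha h
    have := hg.room a ha d hd (hmax a ha h)
    omega
  · intro a ha h
    have := hg.room e he a ha (hmin a ha h)
    omega

/-- The new element `s` has no extension in `A`: place it one letter beyond the image of its
predecessor `d`, the letter being chosen by density of `ℚ` between the branches that have to be
on its left and those that have to be on its right. -/
theorem extend_leaf (hg : Good S A g) {s d : Word} (hs : s ∈ S) (hsA : s ∉ A)
    (hcl : ∀ a ∈ A, ¬ s <+: a → lcp s a ∈ A)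
    (hd : d ∈ A) (hds : d <+: s) (hmax : ∀ a ∈ A, a <+: s → a <+: d)
    (hrk : rk S s = rk S d + 1) (hno : ∀ a ∈ A, ¬ s <+: a) :
    ∃ v, Good S (insert s A) (Function.update g s v) := by
  classical
  have hne : ∀ a ∈ A, d <+: a → d ≠ a → g d ++ [letter (g d) (g a)] <+: g a := fun a ha h h' =>
    letter_prefix (hg.mono hd ha h) (fun h'' => h' (hg.inj hd ha h''))
  have hLne : ∀ a, Br a s → d ≠ a := fun a h h' => h.not_prefix (h' ▸ hds)
  have hRne : ∀ a, Br s a → d ≠ a := fun a h heq => h.not_prefix' (heq ▸ hds)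
  -- every word of `A` extending `d` parts from `s` exactly at `d`
  have hbranch : ∀ a ∈ A, d <+: a → lcp s a = d := fun a ha h =>
    prefix_antisymm_s14 (hmax _ (hcl a ha (hno a ha)) (lcp_left _ _)) (prefix_lcp_s14.2 ⟨hds, h⟩)
  obtain ⟨ρ, hlo, hhi⟩ := Order.exists_between_finsets
    ((A.filter fun a => d <+: a ∧ Br a s).image fun a => letter (g d) (g a))
    ((A.filter fun a => d <+: a ∧ Br s a).image fun a => letter (g d) (g a)) (by
      simp only [Finset.mem_image, Finset.mem_filter]
      rintro _ ⟨a, ⟨ha, hda, has⟩, rfl⟩ _ ⟨b, ⟨hb, hdb, hsb⟩, rfl⟩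
      have h1 := hne a ha hda (hLne a has)
      have h2 := hne b hb hdb (hRne b hsb)
      have hbr := hg.br a ha b hb (has.trans hsb)
      have hab : lcp a b = d := by
        refine prefix_antisymm_s14 ?_ (prefix_lcp_s14.2 ⟨hda, hdb⟩)
        have hσ := letter_prefix hds fun h => hsA (h ▸ hd)
        by_contra hcon
        have hp : lcp a b ≠ d := fun h => hcon (h ▸ List.prefix_refl _)
        have h5 := letter_prefix (prefix_lcp_s14.2 ⟨hda, hdb⟩) hp.symm
        have h6 := h5.trans (lcp_left a b)
        have h7 := h5.trans (lcp_right a b)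
        rcases lt_trichotomy (letter d (lcp a b)) (letter d s) with hlt | heq | hlt
        · exact hsb.asymm ⟨d, _, _, hlt, h7, hσ⟩
        · rw [heq] at h6
          have h8 := prefix_lcp_s14.2 ⟨hσ, h6⟩
          rw [hbranch a ha hda] at h8
          have := h8.length_le
          simp at this
        · exact has.asymm ⟨d, _, _, hlt, hσ, h6⟩
      rcases lt_trichotomy (letter (g d) (g a)) (letter (g d) (g b)) with h | h | h
      · exact h
      · rw [← h] at h2
        have h3 := prefix_lcp_s14.2 ⟨h1, h2⟩
        rw [← hg.meet a ha b hb, hab] at h3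
        have := h3.length_le
        simp at this
      · exact absurd ⟨g d, _, _, h, h2, h1⟩ hbr.asymm)
  simp only [Finset.mem_image, Finset.mem_filter, forall_exists_index, and_imp] at hlo hhi
  have hnp : ∀ a ∈ A, ¬ g d ++ [ρ] <+: g a := by
    intro a ha h
    have hda : d <+: a := hg.reflect hd ha ((List.prefix_append _ _).trans h)
    rcases Br_trichotomy a s with h1 | h1 | h1 | h1
    · have h2 := h.trans (hg.mono ha hd (hmax a ha h1))
      have := h2.length_le
      simp at this
    · exact hno a ha h1
    · exact (hlo _ a ha hda h1 rfl).ne (letter_unique_s14 (hne a ha hda (hLne a h1)) h)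
    · exact (hhi _ a ha hda h1 rfl).ne' (letter_unique_s14 (hne a ha hda (hRne a h1)) h)
  refine ⟨g d ++ [ρ], hg.insert_update hs hsA hcl ?_ ?_ ?_ ?_ ?_ ?_⟩
  · exact fun a ha h => absurd h (hno a ha)
  · intro a ha h
    rw [lcp_concat (hnp a ha), ← hg.meet d hd a ha]
    congr 1
    exact prefix_antisymm_s14 (prefix_lcp_s14.2 ⟨hmax _ (hcl a ha h) (lcp_left _ _), lcp_right _ _⟩)
      (prefix_lcp_s14.2 ⟨(lcp_left _ _).trans hds, lcp_right _ _⟩)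
  · intro a ha h
    rcases h.shrink_right hds with h1 | h1
    · exact ⟨g d, _, ρ, hlo _ a ha h1 h rfl, hne a ha h1 (hLne a h), List.prefix_refl _⟩
    · exact (hg.br a ha d hd h1).mono (List.prefix_refl _) (List.prefix_append _ _)
  · intro a ha h
    rcases h.shrink_left hds with h1 | h1
    · exact ⟨g d, ρ, _, hhi _ a ha h1 h rfl, List.prefix_refl _, hne a ha h1 (hRne a h)⟩
    · exact (hg.br d hd a ha h1).mono (List.prefix_append _ _) (List.prefix_refl _)
  · intro a ha h
    have := hg.room a ha d hd (hmax a ha h)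
    simp only [List.length_append, List.length_singleton]
    omega
  · exact fun a ha h => absurd h (hno a ha)

/-- A shortest element of `S` outside `A` can always be added. -/
theorem extend_one (hg : Good S A g) (hS : MeetClosed S) (h0 : [] ∈ A) {s : Word} (hs : s ∈ S)
    (hsA : s ∉ A) (hshort : ∀ t ∈ S, t ∉ A → s.length ≤ t.length) :
    ∃ v, Good S (insert s A) (Function.update g s v) := by
  classical
  have hlow : ∀ t ∈ S, t <+: s → t ≠ s → t ∈ A := by
    intro t ht hts hne
    by_contra htA
    exact hne (hts.eq_of_length_le (hshort t ht htA))
  have hcl : ∀ a ∈ A, ¬ s <+: a → lcp s a ∈ A := fun a ha h =>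
    hlow _ (hS _ hs _ (hg.sub ha)) (lcp_left _ _) fun h' => h (lcp_eq_left_s14.1 h')
  obtain ⟨d, hd, hdmax⟩ := (A.filter (· <+: s)).exists_max_image List.length
    ⟨[], by simp [h0]⟩
  obtain ⟨hd, hds⟩ := Finset.mem_filter.1 hd
  have hmax : ∀ a ∈ A, a <+: s → a <+: d := fun a ha h =>
    List.prefix_of_prefix_length_le h hds (hdmax a (Finset.mem_filter.2 ⟨ha, h⟩))
  have hrk : rk S s = rk S d + 1 := by
    have : S.filter (· <+: s) = insert s (S.filter (· <+: d)) := by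
      ext t
      simp only [Finset.mem_insert, Finset.mem_filter]
      constructor
      · rintro ⟨ht, hts⟩
        by_cases h : t = s
        · exact Or.inl h
        · exact Or.inr ⟨ht, hmax t (hlow t ht hts h) hts⟩
      · rintro (rfl | ⟨ht, h⟩)
        · exact ⟨hs, List.prefix_refl _⟩
        · exact ⟨ht, h.trans hds⟩
    rw [rk, rk, this, Finset.card_insert_of_notMem]
    intro h
    have := prefix_antisymm_s14 (Finset.mem_filter.1 h).2 hds
    exact hsA (this ▸ hd)
  by_cases hno : ∀ a ∈ A, ¬ s <+: a
  · exact hg.extend_leaf hs hsA hcl hd hds hmax hrk hno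
  · push Not at hno
    obtain ⟨a₀, ha₀, hsa₀⟩ := hno
    obtain ⟨e, he, hemin⟩ := (A.filter (s <+: ·)).exists_min_image List.length
      ⟨a₀, Finset.mem_filter.2 ⟨ha₀, hsa₀⟩⟩
    obtain ⟨he, hse⟩ := Finset.mem_filter.1 he
    refine hg.extend_below hs hsA hcl hd hds hmax hrk he hse fun a ha h => ?_
    have h1 := hemin (lcp e a) (Finset.mem_filter.2 ⟨hg.closed e he a ha, prefix_lcp_s14.2 ⟨hse, h⟩⟩)
    exact lcp_eq_left_s14.1 ((lcp_left e a).eq_of_length_le h1)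

theorem extend_all (hS : MeetClosed S) : ∀ (m : ℕ) (A : Finset Word) (g : Word → Word),
    Good S A g → [] ∈ A → (S \ A).card = m → ∃ f, Good S S f ∧ ∀ a ∈ A, f a = g a := by
  classical
  intro m
  induction m with
  | zero =>
    intro A g hg _ hm
    have : A = S := hg.sub.antisymm (Finset.sdiff_eq_empty_iff_subset.1 (Finset.card_eq_zero.1 hm))
    exact ⟨g, by rw [this] at hg; exact hg, fun _ _ => rfl⟩
  | succ m ih =>
    intro A g hg h0 hm
    obtain ⟨s, hs, hmin⟩ := (S \ A).exists_min_image List.length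
      (Finset.card_pos.1 (by omega))
    obtain ⟨hsS, hsA⟩ := Finset.mem_sdiff.1 hs
    obtain ⟨v, hv⟩ := hg.extend_one hS h0 hsS hsA
      fun t ht htA => hmin t (Finset.mem_sdiff.2 ⟨ht, htA⟩)
    obtain ⟨f, hf, hfa⟩ := ih _ _ hv (Finset.mem_insert_of_mem h0) (by
      rw [Finset.sdiff_insert, Finset.card_erase_of_mem hs]; omega)
    refine ⟨f, hf, fun a ha => ?_⟩
    rw [hfa a (Finset.mem_insert_of_mem ha),
      Function.update_of_ne (fun h => hsA (by rwa [h] at ha))]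

end Good

/-! ### Induced isomorphisms -/

section
variable {C : List Word} {k : ℕ} {a b : Fin k → Word} {h : Word → Word}

theorem IsInducedIso.map_nil (hh : IsInducedIso C a b h) : h [] = [] := by
  obtain ⟨t, ht, hte⟩ := hh.1.surjOn (MCAT_nil (C := C) (w := b))
  have := (hh.2.1 [] MCAT_nil t ht).1.1 List.nil_prefix
  rw [hte] at this
  exact List.prefix_nil.1 this

theorem IsInducedIso.map_lcp (hh : IsInducedIso C a b h) {p q : Word} (hp : p ∈ MCAT C a)
    (hq : q ∈ MCAT C a) : h (lcp p q) = lcp (h p) (h q) := by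
  have hpq := MCAT_meetClosed p hp q hq
  refine prefix_antisymm_s14 (prefix_lcp_s14.2 ⟨(hh.2.1 _ hpq _ hp).1.1 (lcp_left _ _),
    (hh.2.1 _ hpq _ hq).1.1 (lcp_right _ _)⟩) ?_
  obtain ⟨t, ht, hte⟩ := hh.1.surjOn
    (MCAT_meetClosed _ (hh.1.mapsTo hp) _ (hh.1.mapsTo hq))
  rw [← hte]
  refine (hh.2.1 _ ht _ hpq).1.1 (prefix_lcp_s14.2 ⟨(hh.2.1 _ ht _ hp).1.2 ?_,
    (hh.2.1 _ ht _ hq).1.2 ?_⟩)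
  · rw [hte]; exact lcp_left _ _
  · rw [hte]; exact lcp_right _ _

theorem IsInducedIso.map_br (hh : IsInducedIso C a b h) {p q : Word} (hp : p ∈ MCAT C a)
    (hq : q ∈ MCAT C a) (hbr : Br p q) : Br (h p) (h q) :=
  ((hh.2.1 p hp q hq).2.1 (Or.inr hbr)).resolve_left
    fun h' => hbr.not_prefix ((hh.2.1 p hp q hq).1.2 h')

theorem SameTyp.symm (hs : SameTyp C a b) : SameTyp C b a := by
  obtain ⟨h, hbij, hord, hc, hw⟩ := hs
  have hl : ∀ p ∈ MCAT C a, Function.invFunOn h (MCAT C a) (h p) = p := fun p hp =>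
    hbij.injOn.leftInvOn_invFunOn hp
  have hr := hbij.invOn_invFunOn.2
  have hbij' := (Set.bijOn_comm hbij.invOn_invFunOn).2 hbij
  refine ⟨Function.invFunOn h (MCAT C a), hbij', fun p hp q hq => ?_, fun c hcC => ?_,
    fun i => ?_⟩
  · have := hord _ (hbij'.mapsTo hp) _ (hbij'.mapsTo hq)
    rw [hr hp, hr hq] at this
    exact ⟨this.1.symm, this.2.symm⟩
  · have := hl c (MCAT_const hcC)
    rwa [hc c hcC] at this
  · have := hl (a i) (MCAT_word i)
    rwa [hw i] at this

/-- A good map on `S` yields equality of types for every tuple with entries in `S`. -/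
theorem Good.sameTyp {S : Finset Word} {g : Word → Word} (hg : Good S S g) (h0 : [] ∈ S)
    (hg0 : g [] = []) (hCS : ∀ c ∈ C, c ∈ S) (hgC : ∀ c ∈ C, g c = c) (ha : ∀ i, a i ∈ S)
    (hab : ∀ i, g (a i) = b i) : SameTyp C a b := by
  have hsub : MCAT C a ⊆ S := MCAT_subset hg.closed h0 hCS ha
  refine ⟨g, ⟨?_, hg.inj.mono hsub, ?_⟩, fun p hp q hq => ?_, hgC, hab⟩
  · have : MCAT C a ⊆ {p | p ∈ S ∧ g p ∈ MCAT C b} := by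
      refine MCAT_subset ?_ ⟨h0, by rw [hg0]; exact MCAT_nil⟩ (fun c hc => ⟨hCS c hc, ?_⟩)
        (fun i => ⟨ha i, hab i ▸ MCAT_word i⟩)
      · rintro p ⟨hp, hp'⟩ q ⟨hq, hq'⟩
        exact ⟨hg.closed p hp q hq, by rw [hg.meet p hp q hq]; exact MCAT_meetClosed _ hp' _ hq'⟩
      · rw [hgC c hc]; exact MCAT_const hc
    exact fun p hp => (this hp).2
  · refine MCAT_subset ?_ ⟨[], MCAT_nil, hg0⟩ (fun c hc => ⟨c, MCAT_const hc, hgC c hc⟩)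
      (fun i => ⟨a i, MCAT_word i, hab i⟩)
    rintro _ ⟨p, hp, rfl⟩ _ ⟨q, hq, rfl⟩
    exact ⟨lcp p q, MCAT_meetClosed p hp q hq, hg.meet p (hsub hp) q (hsub hq)⟩
  · have hpS := hsub hp
    have hqS := hsub hq
    refine ⟨⟨hg.mono hpS hqS, hg.reflect hpS hqS⟩, ?_, ?_⟩
    · rintro (h | h)
      · exact Or.inl (hg.mono hpS hqS h)
      · exact Or.inr (hg.br p hpS q hqS h)
    · rintro (h | h)
      · exact Or.inl (hg.reflect hpS hqS h)
      · change Br (g p) (g q) at h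
        rcases Br_trichotomy p q with h1 | h1 | h1 | h1
        · exact Or.inl h1
        · exact absurd (hg.mono hqS hpS h1) h.not_prefix'
        · exact Or.inr h1
        · exact absurd (hg.br q hqS p hpS h1) h.asymm

end

/-! ### The gap condition provides enough room -/

theorem rk_le_add_length (S : Finset Word) {d e : Word} (h : d <+: e) :
    d.length + rk S e ≤ e.length + rk S d := by
  classical
  have h1 : (S.filter (· <+: e)) ⊆ S.filter (· <+: d) ∪
      (Finset.Ioc d.length e.length).image (fun i => e.take i) := by
    intro t ht
    obtain ⟨ht, hte⟩ := Finset.mem_filter.1 ht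
    rcases le_or_gt t.length d.length with hl | hl
    · exact Finset.mem_union_left _ (Finset.mem_filter.2
        ⟨ht, List.prefix_of_prefix_length_le hte h hl⟩)
    · exact Finset.mem_union_right _ (Finset.mem_image.2
        ⟨t.length, Finset.mem_Ioc.2 ⟨hl, hte.length_le⟩, (List.prefix_iff_eq_take.1 hte).symm⟩)
  have h2 := (Finset.card_le_card h1).trans (Finset.card_union_le _ _)
  have h3 := Finset.card_image_le (s := Finset.Ioc d.length e.length) (f := fun i => e.take i)
  rw [Nat.card_Ioc] at h3
  have := h.length_le
  unfold rk
  omega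

/-- If at most `N` elements of `S` lie outside `MCAT C a`, then `N`-gaps in the image leave enough
room. Below constants there is room for another reason: these words are fixed. -/
theorem room_of_gaps {C : List Word} (hC : ∀ c ∈ C, ∀ c' : Word, c' <+: c → c' ∈ C) {k : ℕ}
    {a b : Fin k → Word} {h : Word → Word} (hh : IsInducedIso C a b h) {N : ℕ}
    (hgap : HasGaps N (MCAT C b) {c | c ∈ C}) {S A : Finset Word} (hA : (A : Set Word) = MCAT C a)
    (hN : (S \ A).card ≤ N) : ∀ (l : ℕ) (e : Word), e.length = l → e ∈ A → ∀ d ∈ A, d <+: e →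
      (h d).length + rk S e ≤ (h e).length + rk S d := by
  classical
  have hmem : ∀ {t}, t ∈ A ↔ t ∈ MCAT C a := fun {t} => by rw [← hA]; rfl
  intro l
  induction l using Nat.strong_induction_on with
  | _ l ih =>
  intro e hl he d hd hde
  by_cases hne : d = e
  · rw [hne]
  by_cases hc : ∃ c ∈ C, h e <+: c
  · obtain ⟨c, hcC, hec⟩ := hc
    have hfix : ∀ t ∈ A, t <+: e → h t = t := by
      intro t ht hte
      have h1 : h t ∈ C :=
        hC c hcC _ (((hh.2.1 t (hmem.1 ht) e (hmem.1 he)).1.1 hte).trans hec)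
      exact hh.1.injOn (MCAT_const h1) (hmem.1 ht) (hh.2.2.1 _ h1)
    rw [hfix d hd hde, hfix e he (List.prefix_refl _)]
    exact rk_le_add_length S hde
  · push Not at hc
    -- `d'` is the immediate predecessor of `e` in `A`
    obtain ⟨d', hd', hmax⟩ := (A.filter fun t => t <+: e ∧ t ≠ e).exists_max_image List.length
      ⟨d, Finset.mem_filter.2 ⟨hd, hde, hne⟩⟩
    obtain ⟨hd'A, hd'e, hd'ne⟩ := Finset.mem_filter.1 hd'
    have hlt : d'.length < l := by
      rw [← hl]
      exact lt_of_le_of_ne hd'e.length_le fun h => hd'ne (hd'e.eq_of_length h)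
    have hpre : ∀ t ∈ A, t <+: e → t ≠ e → t <+: d' := fun t ht h1 h2 =>
      List.prefix_of_prefix_length_le h1 hd'e (hmax t (Finset.mem_filter.2 ⟨ht, h1, h2⟩))
    have h1 := ih _ hlt d' rfl hd'A d hd (hpre d hd hde hne)
    have h2 := hgap (h d') (hh.1.mapsTo (hmem.1 hd'A)) (h e) (hh.1.mapsTo (hmem.1 he))
      ((hh.2.1 _ (hmem.1 hd'A) _ (hmem.1 he)).1.1 hd'e)
      (fun h' => hd'ne (hh.1.injOn (hmem.1 hd'A) (hmem.1 he) h')) hc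
    have h3 : rk S e ≤ rk S d' + (N + 1) := by
      have hsub : S.filter (· <+: e) ⊆ S.filter (· <+: d') ∪ insert e (S \ A) := by
        intro t ht
        obtain ⟨ht, hte⟩ := Finset.mem_filter.1 ht
        simp only [Finset.mem_union, Finset.mem_filter, Finset.mem_insert, Finset.mem_sdiff]
        by_cases h1 : t = e
        · exact Or.inr (Or.inl h1)
        · by_cases h2 : t ∈ A
          · exact Or.inl ⟨ht, hpre t h2 hte h1⟩
          · exact Or.inr (Or.inr ⟨ht, h2⟩)
      have h4 := (Finset.card_le_card hsub).trans (Finset.card_union_le _ _)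
      have h5 := Finset.card_insert_le e (S \ A)
      unfold rk
      omega
    omega

/-- If `MCAT_C(w̄, v̄)` has `2n`-gaps above `C` and `typ_C(x̄, ȳ) = typ_C(w̄, v̄)`, then for
every `z̄` there is a tuple `ū` with `typ_C(w̄, v̄, ū) = typ_C(x̄, ȳ, z̄)`; in particular
`typ_C(v̄, ū) = typ_C(ȳ, z̄)` and `typ_C(w̄, ū) = typ_C(x̄, z̄)`. -/
theorem stmt14 (C : List Word) (hC : ∀ c ∈ C, ∀ c' : Word, c' <+: c → c' ∈ C)
    {n : ℕ} (w v x y z : Fin n → Word)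
    (hgap : HasGaps (2 * n) (MCAT C (Fin.append w v)) {c | c ∈ C})
    (htyp : SameTyp C (Fin.append x y) (Fin.append w v)) :
    ∃ u : Fin n → Word,
      SameTyp C (Fin.append (Fin.append w v) u) (Fin.append (Fin.append x y) z) ∧
      SameTyp C (Fin.append v u) (Fin.append y z) ∧
      SameTyp C (Fin.append w u) (Fin.append x z) := by
  classical
  obtain ⟨h, hh⟩ := htyp
  set A := (MCAT_finite (C := C) (w := Fin.append x y)).toFinset with hAdef
  set S := (MCAT_finite (C := C) (w := Fin.append (Fin.append x y) z)).toFinset with hSdef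
  have hA : (A : Set Word) = MCAT C (Fin.append x y) := Set.Finite.coe_toFinset _
  have hS : (S : Set Word) = MCAT C (Fin.append (Fin.append x y) z) := Set.Finite.coe_toFinset _
  have hmemA : ∀ {t}, t ∈ A ↔ t ∈ MCAT C (Fin.append x y) := fun {t} => by rw [← hA]; rfl
  have hmemS : ∀ {t}, t ∈ S ↔ t ∈ MCAT C (Fin.append (Fin.append x y) z) :=
    fun {t} => by rw [← hS]; rfl
  have hAcl : MeetClosed (A : Set Word) := hA ▸ MCAT_meetClosed
  have hScl : MeetClosed (S : Set Word) := hS ▸ MCAT_meetClosed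
  have hA0 : [] ∈ A := hmemA.2 MCAT_nil
  have hSw : ∀ i, Fin.append (Fin.append x y) z i ∈ S := fun i => hmemS.2 (MCAT_word i)
  have hSxy : ∀ i, Fin.append x y i ∈ S := fun i => by simpa using hSw (Fin.castAdd n i)
  have hSx : ∀ i, x i ∈ S := fun i => by simpa using hSxy (Fin.castAdd n i)
  have hSy : ∀ i, y i ∈ S := fun i => by
    have := hSxy (Fin.natAdd n i); rwa [Fin.append_right] at this
  have hSz : ∀ i, z i ∈ S := fun i => by simpa using hSw (Fin.natAdd (n + n) i)
  have hSC : ∀ c ∈ C, c ∈ S := fun c hc => hmemS.2 (MCAT_const hc)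
  have hS0 : [] ∈ S := hmemS.2 MCAT_nil
  have hsub : A ⊆ S := fun t ht => hmemS.2 (MCAT_subset MCAT_meetClosed MCAT_nil
    (fun c hc => MCAT_const hc) (fun i => hmemS.1 (hSxy i)) (hmemA.1 ht))
  have hcard : (S \ A).card ≤ 2 * n := by
    obtain ⟨B, hAB, hzB, hB, hcB⟩ := exists_meetClosed_union z A hAcl ⟨[], hA0⟩
    have hSB : S ⊆ B := by
      intro t ht
      refine MCAT_subset (T := B) hB (hAB hA0) (fun c hc => hAB (hmemA.2 (MCAT_const hc)))
        (fun i => ?_) (hmemS.1 ht)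
      refine Fin.addCases (fun i => ?_) (fun i => ?_) i
      · rw [Fin.append_left]; exact hAB (hmemA.2 (MCAT_word i))
      · rw [Fin.append_right]; exact hzB i
    have h1 := Finset.card_le_card hSB
    rw [Finset.card_sdiff_of_subset hsub]
    omega
  have hg : Good S A h :=
    ⟨hsub, hAcl, fun p hp q hq => hh.map_lcp (hmemA.1 hp) (hmemA.1 hq),
      fun p hp q hq => hh.map_br (hmemA.1 hp) (hmemA.1 hq),
      fun d hd e he => room_of_gaps hC hh hgap hA hcard _ e rfl he d hd⟩
  obtain ⟨f, hf, hfA⟩ := Good.extend_all hScl _ A h hg hA0 rfl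
  have hf0 : f [] = [] := by rw [hfA [] hA0, hh.map_nil]
  have hfC : ∀ c ∈ C, f c = c := fun c hc => by
    rw [hfA c (hmemA.2 (MCAT_const hc)), hh.2.2.1 c hc]
  have hfxy : ∀ i, f (Fin.append x y i) = Fin.append w v i := fun i => by
    rw [hfA _ (hmemA.2 (MCAT_word i)), hh.2.2.2 i]
  have hfx : ∀ i, f (x i) = w i := fun i => by simpa using hfxy (Fin.castAdd n i)
  have hfy : ∀ i, f (y i) = v i := fun i => by
    have := hfxy (Fin.natAdd n i); rwa [Fin.append_right, Fin.append_right] at this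
  have key : ∀ {m : ℕ} (p q : Fin m → Word), (∀ i, p i ∈ S) → (∀ i, f (p i) = q i) →
      SameTyp C (Fin.append q fun i => f (z i)) (Fin.append p z) := by
    intro m p q hp hpq
    refine (hf.sameTyp hS0 hf0 hSC hfC (fun i => ?_) fun i => ?_).symm
    · refine Fin.addCases (fun i => ?_) (fun i => ?_) i
      · rw [Fin.append_left]; exact hp i
      · rw [Fin.append_right]; exact hSz i
    · refine Fin.addCases (fun i => ?_) (fun i => ?_) i
      · rw [Fin.append_left, Fin.append_left, hpq i]
      · rw [Fin.append_right, Fin.append_right]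
  exact ⟨fun i => f (z i), key _ _ hSxy hfxy, key _ _ hSy hfy, key _ _ hSx hfx⟩

end CLTL
end
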